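/- arXiv:1906.12037 — 3 statements merged into one kernel-verified Lean document; each statement's English description precedes it below -/
import Mathlib

section
/- Let a, b, c be pairwise distinct elements of ℂ ∖ {0,1}, and set u₁ = 1 + u + v, v₁ = a + b·u + c·v. Then there is a ℂ-algebra isomorphism between the function fields Frac(ℂ[t,u,v,y]/(y³ − t³·u·v·(1+u₁·t)(1+v₁·t))) and Frac(ℂ[t₁,u,v,y₁]/(y₁³·u₁v₁(v₁−u₁) − u·v·t₁(t₁+1))); i.e., the affine hypersurface X₂: y³ = t³·u·v·(1+u₁·t)(1+v₁·t) is birationally equivalent to the affine hypersurface Y: y₁³·u₁v₁(v₁−u₁) = u·v·t₁(t₁+1). An isomorphism is induced by the substitution t = (1/v₁ − 1/u₁)·t₁ − 1/u₁, y = t·u₁v₁·(1/u₁ − 1/v₁)·y₁ (with u, v unchanged). -/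
/-!
Formalization conventions.

* The function field of an affine variety whose coordinate ring `ℂ[x₁,…,xₙ]/I` is an
  integral domain is formalized as `FractionRing` of that coordinate ring (for the total
  rings of fractions of the rings appearing here this is the function field).
* Two such varieties are birationally equivalent iff their function fields are
  isomorphic as `ℂ`-algebras.
-/

noncomputable section
open MvPolynomial

/-- `ω = exp(2πi/3) ∈ ℂ`, a fixed primitive cube root of unity. -/
def ω : ℂ := Complex.exp (2 * Real.pi * Complex.I / 3)

/-- Coordinate ring of the affine hypersurface `f = 0` in `ℂⁿ`. -/
abbrev HSurf {n : ℕ} (f : MvPolynomial (Fin n) ℂ) : Type :=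
  MvPolynomial (Fin n) ℂ ⧸ Ideal.span {f}

/-- Coordinate ring of the affine variety `f = g = 0` in `ℂⁿ`. -/
abbrev HSurf2 {n : ℕ} (f g : MvPolynomial (Fin n) ℂ) : Type :=
  MvPolynomial (Fin n) ℂ ⧸ Ideal.span {f, g}

/-- The image of a polynomial `p` in the function field of the hypersurface `f = 0`. -/
def cls {n : ℕ} (f : MvPolynomial (Fin n) ℂ) (p : MvPolynomial (Fin n) ℂ) :
    FractionRing (HSurf f) :=
  algebraMap (HSurf f) (FractionRing (HSurf f)) (Ideal.Quotient.mk _ p)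

/-- The image of a polynomial `p` in the function field of the variety `f = g = 0`. -/
def cls2 {n : ℕ} (f g : MvPolynomial (Fin n) ℂ) (p : MvPolynomial (Fin n) ℂ) :
    FractionRing (HSurf2 f g) :=
  algebraMap (HSurf2 f g) (FractionRing (HSurf2 f g)) (Ideal.Quotient.mk _ p)

/-- `u₁ = 1 + u + v` (variables: `u = X 1`, `v = X 2`; this is used both for
`X₂` (coordinates `t = X 0, u = X 1, v = X 2, y = X 3`) and for
`Y` (coordinates `t₁ = X 0, u = X 1, v = X 2, y₁ = X 3`)). -/
def u₁P : MvPolynomial (Fin 4) ℂ := 1 + X 1 + X 2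

/-- `v₁ = a + b·u + c·v`. -/
def v₁P (a b c : ℂ) : MvPolynomial (Fin 4) ℂ := C a + C b * X 1 + C c * X 2

/-- Defining polynomial of the affine hypersurface `X₂ : y³ = t³·u·v·(1+u₁·t)(1+v₁·t)`. -/
def pX₂ (a b c : ℂ) : MvPolynomial (Fin 4) ℂ :=
  X 3 ^ 3 - X 0 ^ 3 * X 1 * X 2 * (1 + u₁P * X 0) * (1 + v₁P a b c * X 0)

/-- Defining polynomial of the affine hypersurface `Y : y₁³·u₁v₁(v₁−u₁) = u·v·t₁(t₁+1)`. -/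
def pY (a b c : ℂ) : MvPolynomial (Fin 4) ℂ :=
  X 3 ^ 3 * u₁P * v₁P a b c * (v₁P a b c - u₁P) - X 1 * X 2 * X 0 * (X 0 + 1)

/-!
The substitution is checked on points with values in an arbitrary `ℂ`-algebra `B`. As soon as
`u₁`, `v₁` and `v₁ - u₁` are units, a point of `X₂` with `t` invertible and a point of `Y` with
`(u₁ - v₁)·t₁ - v₁` invertible determine each other: both equations become proportional because
`(1 + u₁t)v₁ = (u₁ - v₁)t₁` and `(1 + v₁t)u₁ = (u₁ - v₁)(t₁ + 1)`. Applied to the universal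
points this gives an isomorphism of localized coordinate rings. The inverted functions are
non-zero-divisors: they do not involve `y`, whereas both equations are primitive as polynomials
in `y`. For `Y` this means that `u₁v₁(v₁ - u₁)` is coprime to `u·v·t₁(t₁ + 1)`, which holds
because `u₁v₁(v₁ - u₁)` does not involve `t₁` and takes the nonzero value `a(a - 1)` at the origin.
-/

section MvPolynomialCoprime

variable {σ K : Type*}

theorem mem_supported_of_dvd [CommSemiring K] [NoZeroDivisors K] {s : Set σ}
    {d h : MvPolynomial σ K} (hdh : d ∣ h) (h0 : h ≠ 0) (hs : h ∈ supported K s) :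
    d ∈ supported K s := by
  classical
  obtain ⟨e, rfl⟩ := hdh
  have hvars : d.vars ⊆ (d * e).vars := by
    simp only [vars_def, degrees_mul_eq (left_ne_zero_of_mul h0) (right_ne_zero_of_mul h0)]
    exact Multiset.toFinset_subset.mpr (Multiset.subset_of_le (Multiset.le_add_right _ _))
  rw [mem_supported] at hs ⊢
  exact (Finset.coe_subset.mpr hvars).trans hs

theorem aeval_update_of_mem_supported [CommSemiring K] [DecidableEq σ] {i : σ}
    (r : MvPolynomial σ K) {d : MvPolynomial σ K} (hd : d ∈ supported K {i}ᶜ) :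
    aeval (Function.update X i r) d = d := by
  have hX : Set.EqOn (aeval (Function.update X i r)) (AlgHom.id K (MvPolynomial σ K))
      (X '' {i}ᶜ) := by
    rintro _ ⟨j, hj, rfl⟩
    simp [Function.update_of_ne hj]
  exact AlgHom.eqOn_adjoin_iff.mpr hX hd

theorem isRelPrime_of_isRelPrime_aeval_update [CommSemiring K] [NoZeroDivisors K]
    [DecidableEq σ] {i : σ} {f h : MvPolynomial σ K} (h0 : h ≠ 0) (hi : h ∈ supported K {i}ᶜ)
    (r s : MvPolynomial σ K)
    (hf : IsRelPrime (aeval (Function.update X i r) f) (aeval (Function.update X i s) f)) :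
    IsRelPrime f h := by
  -- A common divisor does not involve `X i`, so it divides every specialization of `f`.
  intro d hdf hdh
  have hd : d ∈ supported K {i}ᶜ := mem_supported_of_dvd hdh h0 hi
  refine hf ?_ ?_ <;> rw [← aeval_update_of_mem_supported _ hd] <;> exact map_dvd _ hdf

theorem isRelPrime_X_of_constantCoeff_ne_zero [CommRing K] [IsDomain K] {i : σ}
    {h : MvPolynomial σ K} (h0 : constantCoeff h ≠ 0) : IsRelPrime (X i) h := by
  refine X_prime.irreducible.isRelPrime_iff_not_dvd.mpr ?_
  rintro ⟨e, rfl⟩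
  simp at h0

end MvPolynomialCoprime

theorem mk_mem_nonZeroDivisors_of_isRelPrime {A : Type*} [CommRing A] [DecompositionMonoid A]
    {f h : A} (H : IsRelPrime f h) :
    Ideal.Quotient.mk (Ideal.span {f}) h ∈ nonZeroDivisors (A ⧸ Ideal.span {f}) := by
  rw [mem_nonZeroDivisors_iff_right]
  intro x hx
  obtain ⟨x, rfl⟩ := Ideal.Quotient.mk_surjective x
  rw [← map_mul, Ideal.Quotient.eq_zero_iff_dvd] at hx
  exact (Ideal.Quotient.eq_zero_iff_dvd _ _).mpr (H.dvd_of_dvd_mul_right hx)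

section AwayFractionRing

variable (k : Type*) {R R' : Type*} [CommRing k] [CommRing R] [Algebra k R]
  [CommRing R'] [Algebra k R']

/-- The canonical map from the localization `R[1/x]` at a non-zero-divisor `x` to the total ring
of fractions of `R`. -/
def awayToFractionRing {x : R} (hx : x ∈ nonZeroDivisors R) :
    Localization.Away x →ₐ[k] FractionRing R :=
  IsLocalization.Away.liftAlgHom x (f := IsScalarTower.toAlgHom k R (FractionRing R))
    (IsLocalization.map_units (FractionRing R) ⟨x, hx⟩)

theorem awayToFractionRing_algebraMap {x : R} (hx : x ∈ nonZeroDivisors R) (r : R) :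
    awayToFractionRing k hx (algebraMap R _ r) = algebraMap R _ r :=
  IsLocalization.Away.lift_eq x (g := algebraMap R (FractionRing R))
    (IsLocalization.map_units (FractionRing R) ⟨x, hx⟩) r

variable {k}

theorem exists_fractionRing_algEquiv {x : R} {x' : R'} (hx : x ∈ nonZeroDivisors R)
    (hx' : x' ∈ nonZeroDivisors R') (e : Localization.Away x ≃ₐ[k] Localization.Away x') :
    ∃ E : FractionRing R ≃ₐ[k] FractionRing R',
      ∀ z, E (awayToFractionRing k hx z) = awayToFractionRing k hx' (e z) := by
  let _ := (awayToFractionRing k hx).toAlgebra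
  let _ := (awayToFractionRing k hx').toAlgebra
  have : IsScalarTower R (Localization.Away x) (FractionRing R) :=
    .of_algebraMap_eq fun r => (awayToFractionRing_algebraMap k hx r).symm
  have : IsScalarTower R' (Localization.Away x') (FractionRing R') :=
    .of_algebraMap_eq fun r => (awayToFractionRing_algebraMap k hx' r).symm
  have : IsScalarTower k (Localization.Away x) (FractionRing R) :=
    .of_algebraMap_eq fun r => ((awayToFractionRing k hx).commutes r).symm
  have : IsScalarTower k (Localization.Away x') (FractionRing R') :=
    .of_algebraMap_eq fun r => ((awayToFractionRing k hx').commutes r).symm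
  have : IsFractionRing (Localization.Away x) (FractionRing R) :=
    IsFractionRing.isFractionRing_of_isLocalization (Submonoid.powers x) _ _
      (Submonoid.powers_le.mpr hx)
  have : IsFractionRing (Localization.Away x') (FractionRing R') :=
    IsFractionRing.isFractionRing_of_isLocalization (Submonoid.powers x') _ _
      (Submonoid.powers_le.mpr hx')
  exact ⟨IsFractionRing.algEquivOfAlgEquiv e, IsFractionRing.algEquivOfAlgEquiv_algebraMap e⟩

end AwayFractionRing

section BasicOpen

variable {k A B : Type*} [CommRing k] [CommRing A] [Algebra k A] [CommRing B] [Algebra k B]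

/-- The coordinate ring of the open subset `h ≠ 0` of the closed subscheme `f = 0` of `Spec A`. -/
abbrev BasicOpen (f h : A) : Type _ :=
  Localization.Away (Ideal.Quotient.mk (Ideal.span {f}) h)

namespace BasicOpen

variable (k) in
/-- Restriction of functions from `Spec A` to the locally closed subscheme `f = 0`, `h ≠ 0`. -/
def restrict (f h : A) : A →ₐ[k] BasicOpen f h :=
  (IsScalarTower.toAlgHom k (A ⧸ Ideal.span {f}) _).comp (Ideal.Quotient.mkₐ k (Ideal.span {f}))

theorem restrict_self (f h : A) : restrict k f h f = 0 := by
  have hf : Ideal.Quotient.mk (Ideal.span {f}) f = 0 :=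
    Ideal.Quotient.eq_zero_iff_mem.mpr (Ideal.mem_span_singleton_self f)
  simp [restrict, hf]

theorem isUnit_restrict (f h : A) : IsUnit (restrict k f h h) :=
  IsLocalization.Away.algebraMap_isUnit (Ideal.Quotient.mk (Ideal.span {f}) h)

theorem exists_comp_restrict_eq {f h : A} (g : A →ₐ[k] B) (hf : g f = 0) (hh : IsUnit (g h)) :
    ∃ φ : BasicOpen f h →ₐ[k] B, φ.comp (restrict k f h) = g := by
  have hker : ∀ a ∈ Ideal.span {f}, g a = 0 := fun a ha => by
    obtain ⟨b, rfl⟩ := Ideal.mem_span_singleton.mp ha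
    rw [map_mul, hf, zero_mul]
  let gbar := Ideal.Quotient.liftₐ (Ideal.span {f}) g hker
  have hunit : IsUnit (gbar (Ideal.Quotient.mk (Ideal.span {f}) h)) := hh
  exact ⟨IsLocalization.Away.liftAlgHom _ hunit,
    AlgHom.ext fun a => IsLocalization.Away.lift_eq _ hunit (Ideal.Quotient.mk _ a)⟩

theorem algHom_ext {f h : A} {φ ψ : BasicOpen f h →ₐ[k] B}
    (H : φ.comp (restrict k f h) = ψ.comp (restrict k f h)) : φ = ψ :=
  IsLocalization.algHom_ext (Submonoid.powers (Ideal.Quotient.mk (Ideal.span {f}) h))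
    (Ideal.Quotient.algHom_ext k H)

theorem exists_algEquiv {f h : A} {f' h' : B} {φ : BasicOpen f h →ₐ[k] BasicOpen f' h'}
    {ψ : BasicOpen f' h' →ₐ[k] BasicOpen f h}
    (hφψ : φ.comp (ψ.comp (restrict k f' h')) = restrict k f' h')
    (hψφ : ψ.comp (φ.comp (restrict k f h)) = restrict k f h) :
    ∃ e : BasicOpen f h ≃ₐ[k] BasicOpen f' h', e.toAlgHom = φ :=
  ⟨AlgEquiv.ofAlgHom φ ψ (algHom_ext hφψ) (algHom_ext hψφ), rfl⟩

end BasicOpen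

end BasicOpen

section Substitution

variable {a b c : ℂ} {B B' : Type*} [CommRing B] [Algebra ℂ B] [CommRing B'] [Algebra ℂ B']
  {p p' q q' : MvPolynomial (Fin 4) ℂ →ₐ[ℂ] B}

theorem u₁P_mem_supported : u₁P ∈ supported ℂ {1, 2} := by
  have hu : (X 1 : MvPolynomial (Fin 4) ℂ) ∈ supported ℂ {1, 2} := X_mem_supported.mpr (by simp)
  have hv : (X 2 : MvPolynomial (Fin 4) ℂ) ∈ supported ℂ {1, 2} := X_mem_supported.mpr (by simp)
  exact add_mem (add_mem (one_mem _) hu) hv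

theorem v₁P_mem_supported (a b c : ℂ) : v₁P a b c ∈ supported ℂ {1, 2} := by
  have hu : (X 1 : MvPolynomial (Fin 4) ℂ) ∈ supported ℂ {1, 2} := X_mem_supported.mpr (by simp)
  have hv : (X 2 : MvPolynomial (Fin 4) ℂ) ∈ supported ℂ {1, 2} := X_mem_supported.mpr (by simp)
  have hC (r : ℂ) : (C r : MvPolynomial (Fin 4) ℂ) ∈ supported ℂ {1, 2} :=
    Subalgebra.algebraMap_mem _ r
  exact add_mem (add_mem (hC a) (mul_mem (hC b) hu)) (mul_mem (hC c) hv)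

/-- The numerator `(u₁ - v₁)·t₁ - v₁` of the substitution for `t`, whose denominator is
`u₁·v₁`. -/
def numT (a b c : ℂ) : MvPolynomial (Fin 4) ℂ := (u₁P - v₁P a b c) * X 0 - v₁P a b c

/-- The product `u₁·v₁·(v₁ - u₁)` of the forms of the three lines in the `(u, v)`-plane along which
the substitution degenerates. -/
def lineProd (a b c : ℂ) : MvPolynomial (Fin 4) ℂ := u₁P * v₁P a b c * (v₁P a b c - u₁P)

/-- The function `t·u₁·v₁·(v₁ - u₁)` on `X₂`, to be inverted for the substitution to be an
isomorphism. -/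
def denomX₂ (a b c : ℂ) : MvPolynomial (Fin 4) ℂ := X 0 * lineProd a b c

/-- The function `((u₁ - v₁)·t₁ - v₁)·u₁·v₁·(v₁ - u₁)` on `Y`, to be inverted for the substitution
to be an isomorphism. -/
def denomY (a b c : ℂ) : MvPolynomial (Fin 4) ℂ := numT a b c * lineProd a b c

/-- The `B`-valued points `p = (t, u, v, y)` and `q = (t₁, u, v, y₁)` of affine space, given as
algebra homomorphisms out of the polynomial ring, are related by the substitution
`t = (1/v₁ - 1/u₁)·t₁ - 1/u₁`, `y = t·(v₁ - u₁)·y₁`, written without denominators. -/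
structure Corresponds (a b c : ℂ) (p q : MvPolynomial (Fin 4) ℂ →ₐ[ℂ] B) : Prop where
  u_eq : p (X 1) = q (X 1)
  v_eq : p (X 2) = q (X 2)
  t_mul : p (X 0) * q (u₁P * v₁P a b c) = q (numT a b c)
  y_eq : p (X 3) = p (X 0) * q ((v₁P a b c - u₁P) * X 3)

theorem algHom_eq_of_mem_supported (hu : p (X 1) = q (X 1)) (hv : p (X 2) = q (X 2)) :
    ∀ r ∈ supported ℂ {1, 2}, p r = q r := by
  refine AlgHom.eqOn_adjoin_iff.mpr ?_
  rintro _ ⟨i, rfl | rfl, rfl⟩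
  exacts [hu, hv]

theorem algHom_ext_fin_four (h0 : p (X 0) = q (X 0)) (h1 : p (X 1) = q (X 1))
    (h2 : p (X 2) = q (X 2)) (h3 : p (X 3) = q (X 3)) : p = q := by
  refine MvPolynomial.algHom_ext fun i => ?_
  fin_cases i
  exacts [h0, h1, h2, h3]

theorem isUnit_denomX₂_iff : IsUnit (p (denomX₂ a b c)) ↔
    IsUnit (p (X 0)) ∧ IsUnit (p (u₁P * v₁P a b c)) ∧ IsUnit (p (v₁P a b c - u₁P)) := by
  simp only [denomX₂, lineProd, map_mul, IsUnit.mul_iff]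

theorem isUnit_denomY_iff : IsUnit (q (denomY a b c)) ↔
    IsUnit (q (numT a b c)) ∧ IsUnit (q (u₁P * v₁P a b c)) ∧ IsUnit (q (v₁P a b c - u₁P)) := by
  simp only [denomY, lineProd, map_mul, IsUnit.mul_iff]

namespace Corresponds

theorem map (f : B →ₐ[ℂ] B') (h : Corresponds a b c p q) :
    Corresponds a b c (f.comp p) (f.comp q) where
  u_eq := congrArg f h.u_eq
  v_eq := congrArg f h.v_eq
  t_mul := by simpa only [map_mul] using! congrArg f h.t_mul
  y_eq := by simpa only [map_mul] using! congrArg f h.y_eq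

theorem u₁P_eq (h : Corresponds a b c p q) : p u₁P = q u₁P :=
  algHom_eq_of_mem_supported h.u_eq h.v_eq _ u₁P_mem_supported

theorem v₁P_eq (h : Corresponds a b c p q) : p (v₁P a b c) = q (v₁P a b c) :=
  algHom_eq_of_mem_supported h.u_eq h.v_eq _ (v₁P_mem_supported a b c)

theorem isUnit_denom_iff (h : Corresponds a b c p q) :
    IsUnit (p (denomX₂ a b c)) ↔ IsUnit (q (denomY a b c)) := by
  have ht := h.t_mul.symm
  simp only [isUnit_denomX₂_iff, isUnit_denomY_iff, ht, map_mul, map_sub, IsUnit.mul_iff,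
    h.u₁P_eq, h.v₁P_eq]
  tauto

theorem isUnit_t (h : Corresponds a b c p q) (hq : IsUnit (q (denomY a b c))) :
    IsUnit (p (X 0)) :=
  (isUnit_denomX₂_iff.mp (h.isUnit_denom_iff.mpr hq)).1

theorem unique_left (h : Corresponds a b c p q) (h' : Corresponds a b c p' q)
    (hq : IsUnit (q (denomY a b c))) : p = p' := by
  have ht : p (X 0) = p' (X 0) :=
    (isUnit_denomY_iff.mp hq).2.1.mul_left_inj.mp (h.t_mul.trans h'.t_mul.symm)
  exact algHom_ext_fin_four ht (h.u_eq.trans h'.u_eq.symm) (h.v_eq.trans h'.v_eq.symm)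
    (by rw [h.y_eq, h'.y_eq, ht])

theorem unique_right (h : Corresponds a b c p q) (h' : Corresponds a b c p q')
    (hp : IsUnit (p (denomX₂ a b c))) : q = q' := by
  obtain ⟨ht, -, hD⟩ := isUnit_denomX₂_iff.mp hp
  have hU : q' u₁P = q u₁P := h'.u₁P_eq.symm.trans h.u₁P_eq
  have hV : q' (v₁P a b c) = q (v₁P a b c) := h'.v₁P_eq.symm.trans h.v₁P_eq
  rw [map_sub, h.u₁P_eq, h.v₁P_eq] at hD
  refine algHom_ext_fin_four (hD.mul_left_inj.mp ?_) (h.u_eq.symm.trans h'.u_eq)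
    (h.v_eq.symm.trans h'.v_eq) ((ht.mul hD).mul_right_inj.mp ?_)
  · have e := h.t_mul
    have e' := h'.t_mul
    simp only [numT, map_mul, map_sub, hU, hV] at e e'
    linear_combination e - e'
  · have e := h.y_eq
    have e' := h'.y_eq
    simp only [map_mul, map_sub, hU, hV] at e e'
    linear_combination e' - e

theorem mul_pX₂_eq (h : Corresponds a b c p q) :
    q (u₁P * v₁P a b c) * p (pX₂ a b c) =
      p (X 0) ^ 3 * q (v₁P a b c - u₁P) ^ 2 * q (pY a b c) := by
  have ht := h.t_mul
  have hy := h.y_eq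
  simp only [pX₂, pY, numT, map_mul, map_sub, map_add, map_pow, map_one, h.u₁P_eq, h.v₁P_eq, h.u_eq,
    h.v_eq] at ht hy ⊢
  set U := q u₁P
  set V := q (v₁P a b c)
  have hUt : (1 + U * p (X 0)) * V = (U - V) * q (X 0) := by linear_combination ht
  have hVt : (1 + V * p (X 0)) * U = (U - V) * (q (X 0) + 1) := by linear_combination ht
  have hprod : (1 + U * p (X 0)) * V * ((1 + V * p (X 0)) * U) =
      (U - V) * q (X 0) * ((U - V) * (q (X 0) + 1)) := by rw [hUt, hVt]
  rw [hy]
  linear_combination -p (X 0) ^ 3 * q (X 1) * q (X 2) * hprod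

theorem pX₂_eq_zero_iff (h : Corresponds a b c p q) (hq : IsUnit (q (denomY a b c))) :
    p (pX₂ a b c) = 0 ↔ q (pY a b c) = 0 := by
  obtain ⟨-, hUV, hD⟩ := isUnit_denomY_iff.mp hq
  rw [← hUV.mul_right_eq_zero, h.mul_pX₂_eq,
    (((h.isUnit_t hq).pow 3).mul (hD.pow 2)).mul_right_eq_zero]

theorem exists_left (hq : IsUnit (q (denomY a b c))) : ∃ p, Corresponds a b c p q := by
  obtain ⟨-, hUV, -⟩ := isUnit_denomY_iff.mp hq
  obtain ⟨t, ht⟩ : q (u₁P * v₁P a b c) ∣ q (numT a b c) := hUV.dvd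
  refine ⟨aeval ![t, q (X 1), q (X 2), t * q ((v₁P a b c - u₁P) * X 3)], ?_, ?_, ?_, ?_⟩
  · simp
  · simp
  · simpa [numT, mul_comm t] using ht.symm
  · simp

theorem exists_right (hp : IsUnit (p (denomX₂ a b c))) : ∃ q, Corresponds a b c p q := by
  obtain ⟨ht, -, hD⟩ := isUnit_denomX₂_iff.mp hp
  obtain ⟨s, hs⟩ : p (v₁P a b c - u₁P) ∣ -p (X 0 * (u₁P * v₁P a b c) + v₁P a b c) := hD.dvd
  obtain ⟨z, hz⟩ : p (X 0) * p (v₁P a b c - u₁P) ∣ p (X 3) := (ht.mul hD).dvd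
  let q : MvPolynomial (Fin 4) ℂ →ₐ[ℂ] B := aeval ![s, p (X 1), p (X 2), z]
  have huv : ∀ r ∈ supported ℂ {1, 2}, q r = p r :=
    algHom_eq_of_mem_supported (by simp [q]) (by simp [q])
  have hU : q u₁P = p u₁P := huv _ u₁P_mem_supported
  have hV : q (v₁P a b c) = p (v₁P a b c) := huv _ (v₁P_mem_supported a b c)
  have hq0 : q (X 0) = s := by simp [q]
  have hq3 : q (X 3) = z := by simp [q]
  simp only [map_mul, map_add, map_sub] at hs hz
  refine ⟨q, by simp [q], by simp [q], ?_, ?_⟩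
  · simp only [numT, map_mul, map_sub, hU, hV, hq0]
    linear_combination -hs
  · simp only [map_mul, map_sub, hU, hV, hq3]
    linear_combination hz

end Corresponds

theorem exists_basicOpen_algEquiv (a b c : ℂ) :
    ∃ e : BasicOpen (pX₂ a b c) (denomX₂ a b c) ≃ₐ[ℂ] BasicOpen (pY a b c) (denomY a b c),
      Corresponds a b c
        (e.toAlgHom.comp (BasicOpen.restrict ℂ (pX₂ a b c) (denomX₂ a b c)))
        (BasicOpen.restrict ℂ (pY a b c) (denomY a b c)) := by
  have hX := BasicOpen.isUnit_restrict (k := ℂ) (pX₂ a b c) (denomX₂ a b c)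
  have hY := BasicOpen.isUnit_restrict (k := ℂ) (pY a b c) (denomY a b c)
  obtain ⟨p, hp⟩ := Corresponds.exists_left hY
  obtain ⟨q, hq⟩ := Corresponds.exists_right hX
  have hpX := hp.isUnit_denom_iff.mpr hY
  have hqY := hq.isUnit_denom_iff.mp hX
  obtain ⟨φ, rfl⟩ := BasicOpen.exists_comp_restrict_eq p
    ((hp.pX₂_eq_zero_iff hY).mpr (BasicOpen.restrict_self _ _)) hpX
  obtain ⟨ψ, rfl⟩ := BasicOpen.exists_comp_restrict_eq q
    ((hq.pX₂_eq_zero_iff hqY).mp (BasicOpen.restrict_self _ _)) hqY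
  have hφψ := (hq.map φ).unique_right hp hpX
  have hψφ := (hp.map ψ).unique_left hq hqY
  obtain ⟨e, rfl⟩ := BasicOpen.exists_algEquiv hφψ hψφ
  exact ⟨e, hp⟩

end Substitution

section NonZeroDivisors

variable {a : ℂ} (b c : ℂ)

theorem lineProd_mem_supported (a b c : ℂ) : lineProd a b c ∈ supported ℂ {1, 2} :=
  mul_mem (mul_mem u₁P_mem_supported (v₁P_mem_supported a b c))
    (sub_mem (v₁P_mem_supported a b c) u₁P_mem_supported)

theorem numT_mem_supported (a b c : ℂ) : numT a b c ∈ supported ℂ {3}ᶜ := by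
  have hle : supported ℂ ({1, 2} : Set (Fin 4)) ≤ supported ℂ {3}ᶜ := supported_mono (by simp)
  have hu := hle u₁P_mem_supported
  have hv := hle (v₁P_mem_supported a b c)
  exact sub_mem (mul_mem (sub_mem hu hv) (X_mem_supported.mpr (by simp))) hv

theorem denomX₂_mem_supported (a b c : ℂ) : denomX₂ a b c ∈ supported ℂ {3}ᶜ :=
  mul_mem (X_mem_supported.mpr (by simp))
    (supported_mono (by simp) (lineProd_mem_supported a b c))

theorem denomY_mem_supported (a b c : ℂ) : denomY a b c ∈ supported ℂ {3}ᶜ :=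
  mul_mem (numT_mem_supported a b c) (supported_mono (by simp) (lineProd_mem_supported a b c))

theorem constantCoeff_lineProd_ne_zero (ha0 : a ≠ 0) (ha1 : a ≠ 1) :
    constantCoeff (lineProd a b c) ≠ 0 := by
  have h : constantCoeff (lineProd a b c) = a * (a - 1) := by simp [lineProd, u₁P, v₁P]
  rw [h]
  exact mul_ne_zero ha0 (sub_ne_zero.mpr ha1)

theorem lineProd_ne_zero (ha0 : a ≠ 0) (ha1 : a ≠ 1) : lineProd a b c ≠ 0 :=
  ne_zero_of_map (constantCoeff_lineProd_ne_zero b c ha0 ha1)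

theorem numT_ne_zero (ha0 : a ≠ 0) : numT a b c ≠ 0 := by
  have h : constantCoeff (numT a b c) = -a := by simp [numT, v₁P]
  exact ne_zero_of_map (h.trans_ne (neg_ne_zero.mpr ha0))

theorem isRelPrime_X_mul_X_add_one_lineProd (ha0 : a ≠ 0) (ha1 : a ≠ 1) :
    IsRelPrime (X 1 * X 2 * X 0 * (X 0 + 1)) (lineProd a b c) := by
  have hX (i : Fin 4) : IsRelPrime (X i) (lineProd a b c) :=
    isRelPrime_X_of_constantCoeff_ne_zero (constantCoeff_lineProd_ne_zero b c ha0 ha1)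
  have hX' : IsRelPrime (X 0 + 1) (lineProd a b c) := by
    have h0 : lineProd a b c ∈ supported ℂ {0}ᶜ :=
      supported_mono (by simp) (lineProd_mem_supported a b c)
    refine isRelPrime_of_isRelPrime_aeval_update (lineProd_ne_zero b c ha0 ha1) h0 0 0 ?_
    simp [isRelPrime_one_left]
  exact (((hX 1).mul_left (hX 2)).mul_left (hX 0)).mul_left hX'

theorem aeval_update_pX₂ (a b c : ℂ) (r : MvPolynomial (Fin 4) ℂ) :
    aeval (Function.update X 3 r) (pX₂ a b c) =
      r ^ 3 - X 0 ^ 3 * X 1 * X 2 * (1 + u₁P * X 0) * (1 + v₁P a b c * X 0) := by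
  simp [pX₂, u₁P, v₁P]

theorem aeval_update_pY (a b c : ℂ) (r : MvPolynomial (Fin 4) ℂ) :
    aeval (Function.update X 3 r) (pY a b c) =
      r ^ 3 * lineProd a b c - X 1 * X 2 * X 0 * (X 0 + 1) := by
  simp [pY, lineProd, u₁P, v₁P, mul_assoc]

theorem isRelPrime_pX₂_denomX₂ (ha0 : a ≠ 0) (ha1 : a ≠ 1) :
    IsRelPrime (pX₂ a b c) (denomX₂ a b c) := by
  have hne : denomX₂ a b c ≠ 0 := mul_ne_zero (X_ne_zero 0) (lineProd_ne_zero b c ha0 ha1)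
  refine isRelPrime_of_isRelPrime_aeval_update hne (denomX₂_mem_supported a b c) 0 1 ?_
  simp only [aeval_update_pX₂]
  exact IsCoprime.isRelPrime ⟨-1, 1, by ring⟩

theorem isRelPrime_pY_denomY (ha0 : a ≠ 0) (ha1 : a ≠ 1) :
    IsRelPrime (pY a b c) (denomY a b c) := by
  have hne : denomY a b c ≠ 0 := mul_ne_zero (numT_ne_zero b c ha0) (lineProd_ne_zero b c ha0 ha1)
  refine isRelPrime_of_isRelPrime_aeval_update hne (denomY_mem_supported a b c) 0 1 ?_
  have h := (isRelPrime_X_mul_X_add_one_lineProd b c ha0 ha1).neg_left.add_mul_left_right 1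
  simpa only [aeval_update_pY, zero_pow three_ne_zero, zero_mul, one_pow, one_mul, mul_one,
    sub_eq_add_neg, zero_add] using h

end NonZeroDivisors

theorem awayToFractionRing_restrict {n : ℕ} (f h r : MvPolynomial (Fin n) ℂ)
    (hh : Ideal.Quotient.mk (Ideal.span {f}) h ∈ nonZeroDivisors (HSurf f)) :
    awayToFractionRing ℂ hh (BasicOpen.restrict ℂ f h r) = cls f r :=
  awayToFractionRing_algebraMap ℂ hh _

theorem stmt2_general (a b c : ℂ) (ha0 : a ≠ 0) (ha1 : a ≠ 1) :
    ∃ φ : FractionRing (HSurf (pX₂ a b c)) ≃ₐ[ℂ] FractionRing (HSurf (pY a b c)),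
      φ (cls (pX₂ a b c) (X 1)) = cls (pY a b c) (X 1) ∧
      φ (cls (pX₂ a b c) (X 2)) = cls (pY a b c) (X 2) ∧
      φ (cls (pX₂ a b c) (X 0)) * cls (pY a b c) (u₁P * v₁P a b c)
        = cls (pY a b c) ((u₁P - v₁P a b c) * X 0 - v₁P a b c) ∧
      φ (cls (pX₂ a b c) (X 3))
        = φ (cls (pX₂ a b c) (X 0)) * cls (pY a b c) ((v₁P a b c - u₁P) * X 3) := by
  have hX := mk_mem_nonZeroDivisors_of_isRelPrime (isRelPrime_pX₂_denomX₂ b c ha0 ha1)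
  have hY := mk_mem_nonZeroDivisors_of_isRelPrime (isRelPrime_pY_denomY b c ha0 ha1)
  obtain ⟨e, he⟩ := exists_basicOpen_algEquiv a b c
  obtain ⟨φ, hφ⟩ := exists_fractionRing_algEquiv hX hY e
  have h := he.map (awayToFractionRing ℂ hY)
  have hcls (r : MvPolynomial (Fin 4) ℂ) := awayToFractionRing_restrict (pY a b c) _ r hY
  have hφcls (r : MvPolynomial (Fin 4) ℂ) : φ (cls (pX₂ a b c) r) =
      awayToFractionRing ℂ hY (e (BasicOpen.restrict ℂ (pX₂ a b c) (denomX₂ a b c) r)) := by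
    rw [← hφ, awayToFractionRing_restrict]
  refine ⟨φ, ?_⟩
  simp only [← hcls, hφcls]
  exact ⟨h.u_eq, h.v_eq, h.t_mul, h.y_eq⟩

/-- For pairwise distinct `a, b, c ∈ ℂ ∖ {0,1}`, the affine hypersurfaces
`X₂` and `Y` are birationally equivalent: there is a `ℂ`-algebra isomorphism of their
function fields, induced by the substitution `t = (1/v₁ − 1/u₁)·t₁ − 1/u₁`,
`y = t·u₁v₁·(1/u₁ − 1/v₁)·y₁` with `u, v` unchanged.  (The substitution for `t` is
recorded denominator-free as `φ(t)·u₁·v₁ = (u₁ − v₁)·t₁ − v₁`, and, since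
`u₁v₁(1/u₁ − 1/v₁) = v₁ − u₁`, the one for `y` as `φ(y) = φ(t)·(v₁ − u₁)·y₁`.) -/
theorem stmt2 (a b c : ℂ) (ha0 : a ≠ 0) (ha1 : a ≠ 1) (hb0 : b ≠ 0) (hb1 : b ≠ 1)
    (hc0 : c ≠ 0) (hc1 : c ≠ 1) (hab : a ≠ b) (hac : a ≠ c) (hbc : b ≠ c) :
    ∃ φ : FractionRing (HSurf (pX₂ a b c)) ≃ₐ[ℂ] FractionRing (HSurf (pY a b c)),
      φ (cls (pX₂ a b c) (X 1)) = cls (pY a b c) (X 1) ∧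
      φ (cls (pX₂ a b c) (X 2)) = cls (pY a b c) (X 2) ∧
      φ (cls (pX₂ a b c) (X 0)) * cls (pY a b c) (u₁P * v₁P a b c)
        = cls (pY a b c) ((u₁P - v₁P a b c) * X 0 - v₁P a b c) ∧
      φ (cls (pX₂ a b c) (X 3))
        = φ (cls (pX₂ a b c) (X 0)) * cls (pY a b c) ((v₁P a b c - u₁P) * X 3) := by
  exact stmt2_general a b c ha0 ha1
end
end

section
/- Let a, b, c be pairwise distinct elements of ℂ ∖ {0,1}; set u₁ = 1 + u + v, v₁ = a + b·u + c·v, and define the linear polynomials in z: A₁ = (b−z)/(b−c), B₁ = (c−z)/(c−b), and the constants a₁ = (a−b)/(b−c), b₁ = (a−c)/(c−b). Then there is a ℂ-algebra isomorphism φ between the function field of the affine surface S: w³·u₁v₁(v₁−u₁) = u·v (coordinates (w,u,v)) and the function field of the affine surface S₁: w³·t₂³·z(z−1) = (A₁·t₂ + a₁)(B₁·t₂ + b₁) (coordinates (w,t₂,z)), and φ intertwines the order-3 automorphisms given on both sides by w ↦ ω²·w (fixing the other coordinates). An isomorphism is induced by the coordinate change u₁ = t₂, v₁ = t₂·z (solving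 for u, v), with w unchanged. -/
/-!
Formalization conventions.

* The function field of an affine variety whose coordinate ring `ℂ[x₁,…,xₙ]/I` is an
  integral domain is formalized as `FractionRing` of that coordinate ring (for the total
  rings of fractions of the rings appearing here this is the function field).
* Two such varieties are birationally equivalent iff their function fields are
  isomorphic as `ℂ`-algebras.
-/

noncomputable section
open MvPolynomial

/-- `u₁ = 1 + u + v` in the coordinates of `S` (`w = X 0`, `u = X 1`, `v = X 2`). -/
def u₁S : MvPolynomial (Fin 3) ℂ := 1 + X 1 + X 2

/-- `v₁ = a + b·u + c·v`. -/
def v₁S (a b c : ℂ) : MvPolynomial (Fin 3) ℂ := C a + C b * X 1 + C c * X 2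

/-- Defining polynomial of the affine surface `S : w³·u₁v₁(v₁−u₁) = u·v`. -/
def pS (a b c : ℂ) : MvPolynomial (Fin 3) ℂ :=
  X 0 ^ 3 * u₁S * v₁S a b c * (v₁S a b c - u₁S) - X 1 * X 2

/-- `A₁ = (b−z)/(b−c)`, a linear polynomial in `z`, in the coordinates of `S₁`
(`w = X 0`, `t₂ = X 1`, `z = X 2`). -/
def A₁ (b c : ℂ) : MvPolynomial (Fin 3) ℂ := C (b - c)⁻¹ * (C b - X 2)

/-- `B₁ = (c−z)/(c−b)`. -/
def B₁ (b c : ℂ) : MvPolynomial (Fin 3) ℂ := C (c - b)⁻¹ * (C c - X 2)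

/-- The constant `a₁ = (a−b)/(b−c)`. -/
def a₁ (a b c : ℂ) : ℂ := (a - b) / (b - c)

/-- The constant `b₁ = (a−c)/(c−b)`. -/
def b₁ (a b c : ℂ) : ℂ := (a - c) / (c - b)

/-- Defining polynomial of the affine surface `S₁ : w³·t₂³·z(z−1) = (A₁t₂+a₁)(B₁t₂+b₁)`. -/
def pS₁ (a b c : ℂ) : MvPolynomial (Fin 3) ℂ :=
  X 0 ^ 3 * X 1 ^ 3 * X 2 * (X 2 - 1)
    - (A₁ b c * X 1 + C (a₁ a b c)) * (B₁ b c * X 1 + C (b₁ a b c))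

/-!
The substitution `u = B₁t₂ + b₁`, `v = A₁t₂ + a₁` solves the linear system `u₁ = t₂`, `v₁ = t₂z`,
so it carries the equation of `S` to that of `S₁`; conversely `t₂ = u₁`, `z = v₁/u₁` inverts it
wherever `u₁ ≠ 0`. Hence the open subsets `u₁ ≠ 0` of `S` and `t₂ ≠ 0` of `S₁` are isomorphic.
As `u₁` and `t₂` are primes not dividing the respective equations, they are non-zero-divisors on
the two surfaces, and inverting them does not change the function fields. The substitution does
not involve `w`, so it commutes with scaling `w`.
-/

section LocalizedQuotient

variable {K A P : Type*} [CommRing K] [CommRing A] [CommRing P] [Algebra K A] [Algebra K P]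

theorem localizedQuotient_algHom_ext {I : Ideal A} {M : Submonoid (A ⧸ I)}
    {F G : Localization M →ₐ[K] P}
    (h : F.comp (IsScalarTower.toAlgHom K A (Localization M)) =
      G.comp (IsScalarTower.toAlgHom K A (Localization M))) : F = G :=
  Localization.algHom_ext M (Ideal.Quotient.algHom_ext K h)

theorem algebraMap_localizedQuotient_eq_zero {I : Ideal A} (M : Submonoid (A ⧸ I)) {x : A}
    (hx : x ∈ I) : algebraMap A (Localization M) x = 0 := by
  rw [IsScalarTower.algebraMap_apply A (A ⧸ I) (Localization M),
    Ideal.Quotient.algebraMap_eq, Ideal.Quotient.eq_zero_iff_mem.2 hx, map_zero]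

theorem mk_mem_nonZeroDivisors_of_prime [IsDomain A] {f q : A} (hq : Prime q) (hqf : ¬ q ∣ f) :
    Ideal.Quotient.mk (Ideal.span {f}) q ∈ nonZeroDivisors (A ⧸ Ideal.span {f}) := by
  refine mem_nonZeroDivisors_iff_right.2 fun x hx => ?_
  obtain ⟨g, rfl⟩ := Ideal.Quotient.mk_surjective x
  rw [← map_mul, Ideal.Quotient.eq_zero_iff_dvd] at hx
  obtain ⟨h, hh⟩ := hx
  obtain ⟨k, rfl⟩ : q ∣ h := (hq.dvd_or_dvd (hh ▸ dvd_mul_left q g)).resolve_left hqf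
  rw [Ideal.Quotient.eq_zero_iff_dvd]
  exact ⟨k, mul_right_cancel₀ hq.ne_zero (by linear_combination hh)⟩

end LocalizedQuotient

/-- The coordinate ring of the principal open subset `q ≠ 0` of the closed subscheme `f = 0` of
`Spec A`; birational maps are built as isomorphisms between such open subsets. -/
abbrev PrincipalOpen {A : Type*} [CommRing A] (f q : A) : Type _ :=
  Localization.Away (Ideal.Quotient.mk (Ideal.span {f}) q)

namespace PrincipalOpen

variable {K A B P : Type*} [CommRing K] [CommRing A] [CommRing B] [CommRing P]
  [Algebra K A] [Algebra K B] [Algebra K P]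

theorem algebraMap_eq_zero (f q : A) : algebraMap A (PrincipalOpen f q) f = 0 :=
  algebraMap_localizedQuotient_eq_zero _ (Ideal.mem_span_singleton_self f)

theorem isUnit_algebraMap (f q : A) : IsUnit (algebraMap A (PrincipalOpen f q) q) :=
  IsLocalization.Away.algebraMap_isUnit (Ideal.Quotient.mk (Ideal.span {f}) q)

/-- The universal property of `PrincipalOpen f q`: algebra homomorphisms out of `A` killing `f`
and inverting `q` extend to it. -/
def lift {f q : A} (g : A →ₐ[K] P) (hf : g f = 0) (hq : IsUnit (g q)) :
    PrincipalOpen f q →ₐ[K] P :=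
  IsLocalization.Away.liftAlgHom (Ideal.Quotient.mk (Ideal.span {f}) q)
    (f := Ideal.Quotient.liftₐ (Ideal.span {f}) g fun _ hx =>
      (Ideal.span_singleton_le_iff_mem (RingHom.ker g)).2 hf hx) hq

@[simp]
theorem lift_algebraMap {f q : A} (g : A →ₐ[K] P) (hf : g f = 0) (hq : IsUnit (g q)) (x : A) :
    lift g hf hq (algebraMap A _ x) = g x :=
  IsLocalization.Away.lift_eq (Ideal.Quotient.mk (Ideal.span {f}) q) hq _

/-- The morphism of principal open subsets induced by an algebra homomorphism, contravariantly
in the geometric picture. -/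
def map (ψ : A →ₐ[K] B) {f q : A} {g r : B} (hf : ψ f = g) (hq : ψ q = r) :
    PrincipalOpen f q →ₐ[K] PrincipalOpen g r :=
  lift ((IsScalarTower.toAlgHom K B (PrincipalOpen g r)).comp ψ)
    (by simp [hf, algebraMap_eq_zero]) (by simp [hq, isUnit_algebraMap])

@[simp]
theorem map_algebraMap (ψ : A →ₐ[K] B) {f q : A} {g r : B} (hf : ψ f = g) (hq : ψ q = r) (x : A) :
    map ψ hf hq (algebraMap A _ x) = algebraMap B _ (ψ x) :=
  lift_algebraMap _ _ _ x

/-- The isomorphism of principal open subsets given by `map ψ` when `θ` is a two-sided inverse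
of it; `θ` need only be specified on `B`, since `θ ∘ ψ = id` already forces it to kill `g` and to
invert `r`. -/
def equivOfInverse (ψ : A →ₐ[K] B) {f q : A} {g r : B} (hf : ψ f = g) (hq : ψ q = r)
    (θ : B →ₐ[K] PrincipalOpen f q)
    (hθψ : θ.comp ψ = IsScalarTower.toAlgHom K A (PrincipalOpen f q))
    (hψθ : (map ψ hf hq).comp θ = IsScalarTower.toAlgHom K B (PrincipalOpen g r)) :
    PrincipalOpen f q ≃ₐ[K] PrincipalOpen g r :=
  have hθ (x : A) : θ (ψ x) = algebraMap A _ x := DFunLike.congr_fun hθψ x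
  AlgEquiv.ofAlgHom (map ψ hf hq)
    (lift θ (by rw [← hf, hθ, algebraMap_eq_zero])
      (by rw [← hq, hθ]; exact isUnit_algebraMap f q))
    (localizedQuotient_algHom_ext <| AlgHom.ext fun x => by
      simpa using DFunLike.congr_fun hψθ x)
    (localizedQuotient_algHom_ext <| AlgHom.ext fun x => by simp [hθ])

@[simp]
theorem equivOfInverse_algebraMap (ψ : A →ₐ[K] B) {f q : A} {g r : B} (hf : ψ f = g)
    (hq : ψ q = r) (θ : B →ₐ[K] PrincipalOpen f q)
    (hθψ : θ.comp ψ = IsScalarTower.toAlgHom K A (PrincipalOpen f q))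
    (hψθ : (map ψ hf hq).comp θ = IsScalarTower.toAlgHom K B (PrincipalOpen g r)) (x : A) :
    equivOfInverse ψ hf hq θ hθψ hψθ (algebraMap A _ x) = algebraMap B _ (ψ x) :=
  map_algebraMap ψ hf hq x

end PrincipalOpen

section FractionRing

variable {K R S : Type*} [CommRing K] [CommRing R] [CommRing S] [Algebra K R] [Algebra K S]

/-- The comparison isomorphism expressing that localizing at non-zero-divisors does not change the
total ring of fractions. -/
def fractionRingLocalizationEquiv (M : Submonoid R) (hM : M ≤ nonZeroDivisors R) :
    FractionRing (Localization M) ≃ₐ[R] FractionRing R :=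
  letI := IsLocalization.localizationAlgebraOfSubmonoidLe (Localization M) (FractionRing R) M
    (nonZeroDivisors R) hM
  haveI := IsLocalization.localization_isScalarTower_of_submonoid_le (Localization M)
    (FractionRing R) M (nonZeroDivisors R) hM
  haveI := IsFractionRing.isFractionRing_of_isLocalization M (Localization M) (FractionRing R) hM
  (FractionRing.algEquiv (Localization M) (FractionRing R)).restrictScalars R

/-- The isomorphism of total rings of fractions induced by an isomorphism of localizations. -/
def fractionRingEquivOfLocalizationEquiv {M : Submonoid R} {N : Submonoid S}
    (hM : M ≤ nonZeroDivisors R) (hN : N ≤ nonZeroDivisors S)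
    (e : Localization M ≃ₐ[K] Localization N) : FractionRing R ≃ₐ[K] FractionRing S :=
  ((fractionRingLocalizationEquiv M hM).symm.restrictScalars K).trans <|
    (IsFractionRing.algEquivOfAlgEquiv e).trans <|
      (fractionRingLocalizationEquiv N hN).restrictScalars K

theorem fractionRingEquivOfLocalizationEquiv_algebraMap {M : Submonoid R} {N : Submonoid S}
    (hM : M ≤ nonZeroDivisors R) (hN : N ≤ nonZeroDivisors S)
    (e : Localization M ≃ₐ[K] Localization N) {r : R} {s : S}
    (h : e (algebraMap R _ r) = algebraMap S _ s) :
    fractionRingEquivOfLocalizationEquiv hM hN e (algebraMap R _ r) = algebraMap S _ s := by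
  simp only [fractionRingEquivOfLocalizationEquiv, AlgEquiv.trans_apply,
    AlgEquiv.restrictScalars_apply, AlgEquiv.commutes]
  rw [IsScalarTower.algebraMap_apply R (Localization M),
    IsFractionRing.algEquivOfAlgEquiv_algebraMap, h,
    ← IsScalarTower.algebraMap_apply S (Localization N), AlgEquiv.commutes]

end FractionRing

section QuotientFractionRing

variable {K A B : Type*} [CommRing K] [CommRing A] [CommRing B] [Algebra K A] [Algebra K B]

theorem algebraMap_fractionRing_quotient_eq_zero_iff {f x : A} :
    algebraMap A (FractionRing (A ⧸ Ideal.span {f})) x = 0 ↔ f ∣ x := by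
  rw [IsScalarTower.algebraMap_apply A (A ⧸ Ideal.span {f}), IsFractionRing.to_map_eq_zero_iff,
    Ideal.Quotient.algebraMap_eq, Ideal.Quotient.eq_zero_iff_dvd]

/-- The isomorphism of total rings of fractions of two hypersurfaces induced by an isomorphism of
the ambient rings matching their equations. -/
def hypersurfaceFractionRingEquiv (e : A ≃ₐ[K] B) {f : A} {g : B} (h : e f = g) :
    FractionRing (A ⧸ Ideal.span {f}) ≃ₐ[K] FractionRing (B ⧸ Ideal.span {g}) :=
  IsFractionRing.algEquivOfAlgEquiv <|
    Ideal.quotientEquivAlg (Ideal.span {f}) (Ideal.span {g}) e <| by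
      rw [Ideal.map_span, Set.image_singleton, RingHom.coe_coe, h]

@[simp]
theorem hypersurfaceFractionRingEquiv_algebraMap (e : A ≃ₐ[K] B) {f : A} {g : B} (h : e f = g)
    (x : A) : hypersurfaceFractionRingEquiv e h (algebraMap A _ x) = algebraMap B _ (e x) :=
  IsFractionRing.algEquivOfAlgEquiv_algebraMap _ (Ideal.Quotient.mk (Ideal.span {f}) x)

end QuotientFractionRing

section Scaling

theorem algEquiv_pow_apply_of_apply_eq_smul {K A : Type*} [CommSemiring K] [Semiring A]
    [Algebra K A] {σ : A ≃ₐ[K] A} {x : A} {t : K} (h : σ x = t • x) (n : ℕ) :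
    (σ ^ n) x = t ^ n • x := by
  induction n with
  | zero => simp
  | succ n ih => rw [pow_succ, AlgEquiv.mul_apply, h, map_smul, ih, smul_smul, pow_succ']

theorem orderOf_algEquiv_eq_of_apply_X_eq_smul {ι K : Type*} [Field K]
    {I : Ideal (MvPolynomial ι K)} {M : Submonoid (MvPolynomial ι K ⧸ I)}
    {σ : Localization M ≃ₐ[K] Localization M} {i : ι} {t : K}
    (hX : algebraMap (MvPolynomial ι K) (Localization M) (X i) ≠ 0)
    (hi : σ (algebraMap (MvPolynomial ι K) (Localization M) (X i)) =
      t • algebraMap (MvPolynomial ι K) (Localization M) (X i))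
    (hfix : ∀ j ≠ i, σ (algebraMap (MvPolynomial ι K) (Localization M) (X j)) =
      algebraMap (MvPolynomial ι K) (Localization M) (X j)) :
    orderOf σ = orderOf t := by
  refine orderOf_eq_orderOf_iff.2 fun n => ⟨fun h => ?_, fun h => ?_⟩
  · have hn := algEquiv_pow_apply_of_apply_eq_smul hi n
    rw [h, AlgEquiv.one_apply] at hn
    exact smul_left_injective K hX (by simpa only [one_smul] using hn.symm)
  · suffices (σ ^ n).toAlgHom = AlgHom.id K (Localization M) from
      AlgEquiv.ext fun x => DFunLike.congr_fun this x
    refine localizedQuotient_algHom_ext (P := Localization M) <|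
      MvPolynomial.algHom_ext fun j => ?_
    obtain rfl | hj := eq_or_ne j i
    · simpa [h] using algEquiv_pow_apply_of_apply_eq_smul hi n
    · simpa using algEquiv_pow_apply_of_apply_eq_smul ((hfix j hj).trans (one_smul K _).symm) n

variable {ι K : Type*} [DecidableEq ι] [CommSemiring K]

theorem aeval_update_C_mul_X_comp_self (i : ι) {s t : K} (h : s * t = 1) :
    (aeval (R := K) (Function.update X i (C s * X i))).comp
      (aeval (Function.update X i (C t * X i))) = AlgHom.id K (MvPolynomial ι K) := by
  ext j : 1
  obtain rfl | hj := eq_or_ne j i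
  · simp [mul_left_comm, ← mul_assoc, ← C_mul, h, algHom_C]
  · simp [hj]

/-- The diagonal automorphism of a polynomial ring multiplying one variable by a unit. -/
def scaleX (i : ι) (t : Kˣ) : MvPolynomial ι K ≃ₐ[K] MvPolynomial ι K :=
  AlgEquiv.ofAlgHom (aeval (Function.update X i (C (t : K) * X i)))
    (aeval (Function.update X i (C (↑t⁻¹ : K) * X i)))
    (aeval_update_C_mul_X_comp_self i t.mul_inv) (aeval_update_C_mul_X_comp_self i t.inv_mul)

@[simp]
theorem scaleX_X_self (i : ι) (t : Kˣ) : scaleX i t (X i) = C (t : K) * X i := by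
  simp [scaleX]

@[simp]
theorem scaleX_X_of_ne {i j : ι} (h : j ≠ i) (t : Kˣ) :
    scaleX i t (X j : MvPolynomial ι K) = X j := by
  simp [scaleX, h]

@[simp]
theorem scaleX_C (i : ι) (t : Kˣ) (r : K) : scaleX i t (C r) = C r :=
  (scaleX i t).commutes r

end Scaling

theorem not_dvd_of_eval {ι R : Type*} [CommSemiring R] {p q : MvPolynomial ι R} (x : ι → R)
    (hp : eval x p = 0) (hq : eval x q ≠ 0) : ¬ p ∣ q := fun h =>
  hq <| zero_dvd_iff.1 <| hp ▸ map_dvd (eval x) h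

section Hypersurface

variable {n : ℕ} {f : MvPolynomial (Fin n) ℂ}

theorem cls_eq_zero_iff {p : MvPolynomial (Fin n) ℂ} : cls f p = 0 ↔ f ∣ p :=
  algebraMap_fractionRing_quotient_eq_zero_iff

theorem cls_smul (r : ℂ) (p : MvPolynomial (Fin n) ℂ) : cls f (r • p) = r • cls f p :=
  map_smul (IsScalarTower.toAlgHom ℂ (MvPolynomial (Fin n) ℂ) (FractionRing (HSurf f))) r p

theorem cls_mul (p q : MvPolynomial (Fin n) ℂ) : cls f (p * q) = cls f p * cls f q := by
  simp only [cls, map_mul]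

/-- The automorphism multiplying the `i`-th coordinate by `t`, on the function field of a
hypersurface whose equation it preserves. -/
def scaleEquiv {i : Fin n} {t : ℂˣ} (hf : scaleX i t f = f) :
    FractionRing (HSurf f) ≃ₐ[ℂ] FractionRing (HSurf f) :=
  hypersurfaceFractionRingEquiv (scaleX i t) hf

variable {i : Fin n} {t : ℂˣ} (hf : scaleX i t f = f)

theorem scaleEquiv_cls (p : MvPolynomial (Fin n) ℂ) :
    scaleEquiv hf (cls f p) = cls f (scaleX i t p) :=
  hypersurfaceFractionRingEquiv_algebraMap _ _ p

theorem scaleEquiv_cls_X_self : scaleEquiv hf (cls f (X i)) = (t : ℂ) • cls f (X i) := by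
  rw [scaleEquiv_cls, scaleX_X_self, ← smul_eq_C_mul, cls_smul]

theorem scaleEquiv_cls_X_of_ne {j : Fin n} (hj : j ≠ i) :
    scaleEquiv hf (cls f (X j)) = cls f (X j) := by
  rw [scaleEquiv_cls, scaleX_X_of_ne hj]

theorem orderOf_scaleEquiv (hX : cls f (X i) ≠ 0) : orderOf (scaleEquiv hf) = orderOf (t : ℂ) :=
  orderOf_algEquiv_eq_of_apply_X_eq_smul hX (scaleEquiv_cls_X_self hf)
    fun _ hj => scaleEquiv_cls_X_of_ne hf hj

end Hypersurface

theorem prime_u₁S : Prime u₁S := by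
  have hvars : (2 : Fin 3) ∉ (1 + X 1 : MvPolynomial (Fin 3) ℂ).vars := fun h => by
    simpa using vars_add_subset _ _ h
  have h : Irreducible (1 * X 2 + (1 + X 1) : MvPolynomial (Fin 3) ℂ) :=
    irreducible_mul_X_add _ _ _ one_ne_zero (by simp) hvars isRelPrime_one_left
  rw [u₁S]
  convert h.prime using 1
  ring

/-- The morphism `S₁ → S` solving `u₁ = t₂`, `v₁ = t₂z` for `u` and `v`, on ambient coordinate
rings: `(w, u, v) ↦ (w, B₁t₂ + b₁, A₁t₂ + a₁)`. -/
def chart (a b c : ℂ) : MvPolynomial (Fin 3) ℂ →ₐ[ℂ] MvPolynomial (Fin 3) ℂ :=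
  aeval ![X 0, B₁ b c * X 1 + C (b₁ a b c), A₁ b c * X 1 + C (a₁ a b c)]

section Chart

variable (a : ℂ) {b c : ℂ}

theorem chart_u₁S (hbc : b ≠ c) : chart a b c u₁S = X 1 :=
  MvPolynomial.funext fun x => by
    have := sub_ne_zero.2 hbc
    have := sub_ne_zero.2 hbc.symm
    simp only [chart, u₁S, A₁, B₁, a₁, b₁, map_add, map_sub, map_mul, map_one, aeval_X,
      Matrix.cons_val, eval_C, eval_X]
    field_simp
    ring

theorem chart_v₁S (hbc : b ≠ c) : chart a b c (v₁S a b c) = X 1 * X 2 :=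
  MvPolynomial.funext fun x => by
    have := sub_ne_zero.2 hbc
    have := sub_ne_zero.2 hbc.symm
    simp only [chart, v₁S, A₁, B₁, a₁, b₁, map_add, map_sub, map_mul, algHom_C, algebraMap_eq,
      aeval_X, Matrix.cons_val, eval_C, eval_X]
    field_simp
    ring

theorem chart_pS (hbc : b ≠ c) : chart a b c (pS a b c) = pS₁ a b c := by
  simp only [pS, pS₁, map_sub, map_mul, map_pow, chart_u₁S a hbc, chart_v₁S a hbc]
  simp only [chart, aeval_X, Matrix.cons_val]
  ring

theorem X_one_eq_linear_combination_u₁S_v₁S (hbc : b ≠ c) :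
    X 1 = C (c - b)⁻¹ * (C c * u₁S - v₁S a b c) + C (b₁ a b c) :=
  MvPolynomial.funext fun x => by
    have := sub_ne_zero.2 hbc.symm
    simp only [u₁S, v₁S, b₁, map_add, map_sub, map_mul, map_one, eval_C, eval_X]
    field_simp
    ring

theorem X_two_eq_linear_combination_u₁S_v₁S (hbc : b ≠ c) :
    X 2 = C (b - c)⁻¹ * (C b * u₁S - v₁S a b c) + C (a₁ a b c) :=
  MvPolynomial.funext fun x => by
    have := sub_ne_zero.2 hbc
    simp only [u₁S, v₁S, a₁, map_add, map_sub, map_mul, map_one, eval_C, eval_X]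
    field_simp
    ring

end Chart

/-- The rational inverse of `chart`, defined away from `u₁ = 0`:
`(w, t₂, z) ↦ (w, u₁, v₁ / u₁)`. -/
def chartInv (a b c : ℂ) : MvPolynomial (Fin 3) ℂ →ₐ[ℂ] PrincipalOpen (pS a b c) u₁S :=
  aeval ![algebraMap (MvPolynomial (Fin 3) ℂ) _ (X 0), algebraMap (MvPolynomial (Fin 3) ℂ) _ u₁S,
    algebraMap (MvPolynomial (Fin 3) ℂ) _ (v₁S a b c) *
      IsLocalization.Away.invSelf (Ideal.Quotient.mk (Ideal.span {pS a b c}) u₁S)]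

section ChartInv

variable (a b c : ℂ)

@[simp]
theorem chartInv_X_zero :
    chartInv a b c (X 0) = algebraMap (MvPolynomial (Fin 3) ℂ) _ (X 0) := by
  simp only [chartInv, aeval_X, Matrix.cons_val]

@[simp]
theorem chartInv_X_one :
    chartInv a b c (X 1) = algebraMap (MvPolynomial (Fin 3) ℂ) _ u₁S := by
  simp only [chartInv, aeval_X, Matrix.cons_val]

theorem chartInv_X_one_mul_X_two :
    chartInv a b c (X 1 * X 2) = algebraMap (MvPolynomial (Fin 3) ℂ) _ (v₁S a b c) := by
  have h : algebraMap (MvPolynomial (Fin 3) ℂ) (PrincipalOpen (pS a b c) u₁S) u₁S *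
      IsLocalization.Away.invSelf (Ideal.Quotient.mk (Ideal.span {pS a b c}) u₁S) = 1 :=
    IsLocalization.Away.mul_invSelf (Ideal.Quotient.mk (Ideal.span {pS a b c}) u₁S)
  rw [map_mul, chartInv_X_one]
  simp only [chartInv, aeval_X, Matrix.cons_val]
  rw [mul_left_comm, h, mul_one]

theorem chartInv_C (r : ℂ) :
    chartInv a b c (C r) = algebraMap (MvPolynomial (Fin 3) ℂ) _ (C r) := by
  rw [algHom_C, ← algebraMap_eq, ← IsScalarTower.algebraMap_apply]

variable {b c}

theorem chartInv_comp_chart (hbc : b ≠ c) :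
    (chartInv a b c).comp (chart a b c) =
      IsScalarTower.toAlgHom ℂ _ (PrincipalOpen (pS a b c) u₁S) := by
  have key (r s t : ℂ) : chartInv a b c (C r * (C s * X 1 - X 1 * X 2) + C t) =
      algebraMap _ _ (C r * (C s * u₁S - v₁S a b c) + C t) := by
    simp only [map_add, map_sub, map_mul (chartInv a b c) (C _), chartInv_X_one_mul_X_two,
      chartInv_C, chartInv_X_one, map_mul (algebraMap _ _) (C _)]
  refine MvPolynomial.algHom_ext fun j => ?_
  match j with
  | 0 => simp [chart]
  | 1 =>
    have h : chart a b c (X 1) = C (c - b)⁻¹ * (C c * X 1 - X 1 * X 2) + C (b₁ a b c) := by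
      simp only [chart, aeval_X, Matrix.cons_val, B₁]
      ring
    rw [AlgHom.comp_apply, h, key, ← X_one_eq_linear_combination_u₁S_v₁S a hbc,
      IsScalarTower.toAlgHom_apply]
  | 2 =>
    have h : chart a b c (X 2) = C (b - c)⁻¹ * (C b * X 1 - X 1 * X 2) + C (a₁ a b c) := by
      simp only [chart, aeval_X, Matrix.cons_val, A₁]
      ring
    rw [AlgHom.comp_apply, h, key, ← X_two_eq_linear_combination_u₁S_v₁S a hbc,
      IsScalarTower.toAlgHom_apply]

theorem map_chart_comp_chartInv (hbc : b ≠ c) :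
    (PrincipalOpen.map (chart a b c) (chart_pS a hbc) (chart_u₁S a hbc)).comp (chartInv a b c) =
      IsScalarTower.toAlgHom ℂ _ (PrincipalOpen (pS₁ a b c) (X 1)) := by
  set m := PrincipalOpen.map (chart a b c) (chart_pS a hbc) (chart_u₁S a hbc)
  have hX1 : m (chartInv a b c (X 1)) = algebraMap (MvPolynomial (Fin 3) ℂ) _ (X 1) := by
    simp [m, chart_u₁S a hbc]
  refine MvPolynomial.algHom_ext fun j => ?_
  match j with
  | 0 => simp [m, chart]
  | 1 => exact hX1
  | 2 =>
    have h := congrArg m (chartInv_X_one_mul_X_two a b c)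
    rw [map_mul, map_mul, hX1, PrincipalOpen.map_algebraMap, chart_v₁S a hbc, map_mul] at h
    exact (PrincipalOpen.isUnit_algebraMap (pS₁ a b c) (X 1)).mul_left_cancel h

end ChartInv

theorem mk_u₁S_mem_nonZeroDivisors (a b c : ℂ) :
    Ideal.Quotient.mk (Ideal.span {pS a b c}) u₁S ∈ nonZeroDivisors (HSurf (pS a b c)) :=
  mk_mem_nonZeroDivisors_of_prime prime_u₁S <|
    not_dvd_of_eval ![0, 1, -2] (by norm_num [u₁S, Matrix.cons_val_two])
      (by simp [pS, Matrix.cons_val])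

theorem mk_X_one_mem_nonZeroDivisors {a b c : ℂ} (hab : a ≠ b) (hac : a ≠ c) (hbc : b ≠ c) :
    Ideal.Quotient.mk (Ideal.span {pS₁ a b c}) (X 1) ∈ nonZeroDivisors (HSurf (pS₁ a b c)) :=
  mk_mem_nonZeroDivisors_of_prime (X_prime (i := 1)) <|
    not_dvd_of_eval 0 (by simp) <| by
      simp [pS₁, a₁, b₁, sub_eq_zero, hab, hac, hbc, hbc.symm]

/-- The isomorphism `ℂ(S) ≃ ℂ(S₁)` of function fields induced by `chart`. -/
def functionFieldEquiv {a b c : ℂ} (hab : a ≠ b) (hac : a ≠ c) (hbc : b ≠ c) :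
    FractionRing (HSurf (pS a b c)) ≃ₐ[ℂ] FractionRing (HSurf (pS₁ a b c)) :=
  fractionRingEquivOfLocalizationEquiv
    (Submonoid.powers_le.2 (mk_u₁S_mem_nonZeroDivisors a b c))
    (Submonoid.powers_le.2 (mk_X_one_mem_nonZeroDivisors hab hac hbc))
    (PrincipalOpen.equivOfInverse (chart a b c) (chart_pS a hbc) (chart_u₁S a hbc)
      (chartInv a b c) (chartInv_comp_chart a hbc) (map_chart_comp_chartInv a hbc))

theorem functionFieldEquiv_cls {a b c : ℂ} (hab : a ≠ b) (hac : a ≠ c) (hbc : b ≠ c)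
    (p : MvPolynomial (Fin 3) ℂ) :
    functionFieldEquiv hab hac hbc (cls (pS a b c) p) = cls (pS₁ a b c) (chart a b c p) :=
  fractionRingEquivOfLocalizationEquiv_algebraMap _ _ _ <|
    PrincipalOpen.equivOfInverse_algebraMap _ _ _ _ _ _ p

theorem scaleX_zero_u₁S (t : ℂˣ) : scaleX 0 t u₁S = u₁S := by
  simp [u₁S]

theorem scaleX_zero_v₁S (t : ℂˣ) (a b c : ℂ) : scaleX 0 t (v₁S a b c) = v₁S a b c := by
  simp [v₁S]

theorem scaleX_zero_pS {t : ℂˣ} (ht : t ^ 3 = 1) (a b c : ℂ) :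
    scaleX 0 t (pS a b c) = pS a b c := by
  have ht' : (C (t : ℂ) : MvPolynomial (Fin 3) ℂ) ^ 3 = 1 := by
    rw [← map_pow, ← Units.val_pow_eq_pow_val, ht, Units.val_one, map_one]
  simp [pS, scaleX_zero_u₁S, scaleX_zero_v₁S, mul_pow, ht']

theorem chart_scaleX_zero (t : ℂˣ) (a b c : ℂ) (p : MvPolynomial (Fin 3) ℂ) :
    chart a b c (scaleX 0 t p) = scaleX 0 t (chart a b c p) := by
  suffices (chart a b c).comp (scaleX 0 t : _ ≃ₐ[ℂ] _).toAlgHom =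
    (scaleX 0 t : _ ≃ₐ[ℂ] _).toAlgHom.comp (chart a b c) from DFunLike.congr_fun this p
  refine MvPolynomial.algHom_ext fun j => ?_
  match j with
  | 0 => simp [chart, algHom_C]
  | 1 => simp [chart, B₁]
  | 2 => simp [chart, A₁]

theorem scaleX_zero_pS₁ {t : ℂˣ} (ht : t ^ 3 = 1) (a : ℂ) {b c : ℂ} (hbc : b ≠ c) :
    scaleX 0 t (pS₁ a b c) = pS₁ a b c := by
  rw [← chart_pS a hbc, ← chart_scaleX_zero, scaleX_zero_pS ht]

theorem cls_pS_X_zero_ne_zero (a b c : ℂ) : cls (pS a b c) (X 0) ≠ 0 :=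
  cls_eq_zero_iff.not.2 <|
    not_dvd_of_eval (q := X 0) ![1, 0, -1] (by simp [pS, u₁S]) (by simp)

section FunctionFieldEquiv

variable {a b c : ℂ} (hab : a ≠ b) (hac : a ≠ c) (hbc : b ≠ c)

theorem functionFieldEquiv_scaleEquiv {t : ℂˣ} (h : scaleX 0 t (pS a b c) = pS a b c)
    (h₁ : scaleX 0 t (pS₁ a b c) = pS₁ a b c) (x : FractionRing (HSurf (pS a b c))) :
    functionFieldEquiv hab hac hbc (scaleEquiv h x) =
      scaleEquiv h₁ (functionFieldEquiv hab hac hbc x) := by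
  let Φ := functionFieldEquiv hab hac hbc
  suffices Φ.toAlgHom.comp (scaleEquiv h).toAlgHom = (scaleEquiv h₁).toAlgHom.comp Φ.toAlgHom from
    DFunLike.congr_fun this x
  refine localizedQuotient_algHom_ext <| AlgHom.ext fun p => ?_
  change Φ (scaleEquiv h (cls _ p)) = scaleEquiv h₁ (Φ (cls _ p))
  simp only [Φ, scaleEquiv_cls, functionFieldEquiv_cls, chart_scaleX_zero]

theorem functionFieldEquiv_cls_X_zero :
    functionFieldEquiv hab hac hbc (cls (pS a b c) (X 0)) = cls (pS₁ a b c) (X 0) := by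
  rw [functionFieldEquiv_cls, chart, aeval_X, Matrix.cons_val_zero]

theorem functionFieldEquiv_cls_u₁S :
    functionFieldEquiv hab hac hbc (cls (pS a b c) u₁S) = cls (pS₁ a b c) (X 1) := by
  rw [functionFieldEquiv_cls, chart_u₁S a hbc]

theorem functionFieldEquiv_cls_v₁S :
    functionFieldEquiv hab hac hbc (cls (pS a b c) (v₁S a b c)) =
      cls (pS₁ a b c) (X 2) * cls (pS₁ a b c) (X 1) := by
  rw [functionFieldEquiv_cls, chart_v₁S a hbc, mul_comm, cls_mul]

end FunctionFieldEquiv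

theorem cls_pS₁_X_zero_ne_zero {a b c : ℂ} (hab : a ≠ b) (hac : a ≠ c) (hbc : b ≠ c) :
    cls (pS₁ a b c) (X 0) ≠ 0 := by
  rw [← functionFieldEquiv_cls_X_zero hab hac hbc]
  exact (map_ne_zero_iff _ (functionFieldEquiv hab hac hbc).injective).2
    (cls_pS_X_zero_ne_zero a b c)

theorem isPrimitiveRoot_omega : IsPrimitiveRoot ω 3 := by
  simpa [ω] using Complex.isPrimitiveRoot_exp 3 (by norm_num)

theorem exists_unit_eq_omega_sq : ∃ t : ℂˣ, (t : ℂ) = ω ^ 2 ∧ t ^ 3 = 1 ∧ orderOf (t : ℂ) = 3 := by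
  have hω : IsPrimitiveRoot (ω ^ 2) 3 := isPrimitiveRoot_omega.pow_of_coprime 2 (by norm_num)
  obtain ⟨t, ht⟩ := hω.isUnit (by norm_num)
  exact ⟨t, ht, Units.ext (by simpa [ht] using hω.pow_eq_one), ht ▸ hω.eq_orderOf.symm⟩

/-- For pairwise distinct `a, b, c ∈ ℂ ∖ {0,1}` there is a `ℂ`-algebra
isomorphism between the function fields of `S` and `S₁` intertwining the order-3
automorphisms `w ↦ ω²·w` (fixing the other coordinates) on both sides; an isomorphism
is induced by the coordinate change `u₁ = t₂`, `v₁ = t₂·z` (solving for `u, v`), with `w`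
unchanged.  (We record the induced isomorphism in the direction
`φ : Frac(S₁) → Frac(S)`, `t₂ ↦ u₁`, `z ↦ v₁/u₁` — denominator-free:
`φ(z)·u₁ = v₁` — and `w ↦ w`.) -/
theorem stmt4 (a b c : ℂ) (ha0 : a ≠ 0) (ha1 : a ≠ 1) (hb0 : b ≠ 0) (hb1 : b ≠ 1)
    (hc0 : c ≠ 0) (hc1 : c ≠ 1) (hab : a ≠ b) (hac : a ≠ c) (hbc : b ≠ c) :
    ∃ (φ : FractionRing (HSurf (pS₁ a b c)) ≃ₐ[ℂ] FractionRing (HSurf (pS a b c)))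
      (σ : FractionRing (HSurf (pS a b c)) ≃ₐ[ℂ] FractionRing (HSurf (pS a b c)))
      (σ₁ : FractionRing (HSurf (pS₁ a b c)) ≃ₐ[ℂ] FractionRing (HSurf (pS₁ a b c))),
      orderOf σ = 3 ∧
      σ (cls (pS a b c) (X 0)) = (ω ^ 2 : ℂ) • cls (pS a b c) (X 0) ∧
      σ (cls (pS a b c) (X 1)) = cls (pS a b c) (X 1) ∧
      σ (cls (pS a b c) (X 2)) = cls (pS a b c) (X 2) ∧
      orderOf σ₁ = 3 ∧
      σ₁ (cls (pS₁ a b c) (X 0)) = (ω ^ 2 : ℂ) • cls (pS₁ a b c) (X 0) ∧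
      σ₁ (cls (pS₁ a b c) (X 1)) = cls (pS₁ a b c) (X 1) ∧
      σ₁ (cls (pS₁ a b c) (X 2)) = cls (pS₁ a b c) (X 2) ∧
      (∀ k, φ (σ₁ k) = σ (φ k)) ∧
      φ (cls (pS₁ a b c) (X 0)) = cls (pS a b c) (X 0) ∧
      φ (cls (pS₁ a b c) (X 1)) = cls (pS a b c) u₁S ∧
      φ (cls (pS₁ a b c) (X 2)) * cls (pS a b c) u₁S = cls (pS a b c) (v₁S a b c) := by
  obtain ⟨t, htω, ht, hord⟩ := exists_unit_eq_omega_sq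
  have h := scaleX_zero_pS ht a b c
  have h₁ := scaleX_zero_pS₁ ht a hbc
  let Φ := functionFieldEquiv hab hac hbc
  rw [← htω]
  refine ⟨Φ.symm, scaleEquiv h, scaleEquiv h₁,
    (orderOf_scaleEquiv h (cls_pS_X_zero_ne_zero a b c)).trans hord,
    scaleEquiv_cls_X_self h,
    scaleEquiv_cls_X_of_ne h (by decide),
    scaleEquiv_cls_X_of_ne h (by decide),
    (orderOf_scaleEquiv h₁ (cls_pS₁_X_zero_ne_zero hab hac hbc)).trans hord,
    scaleEquiv_cls_X_self h₁,
    scaleEquiv_cls_X_of_ne h₁ (by decide),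
    scaleEquiv_cls_X_of_ne h₁ (by decide), fun k => ?_,
    Φ.symm_apply_eq.2 (functionFieldEquiv_cls_X_zero hab hac hbc).symm,
    Φ.symm_apply_eq.2 (functionFieldEquiv_cls_u₁S hab hac hbc).symm, ?_⟩
  · rw [AlgEquiv.symm_apply_eq, functionFieldEquiv_scaleEquiv hab hac hbc h h₁,
      AlgEquiv.apply_symm_apply]
  · apply Φ.injective
    rw [map_mul, AlgEquiv.apply_symm_apply, functionFieldEquiv_cls_u₁S,
      functionFieldEquiv_cls_v₁S]
end
end

section
/- Let a, b, c be pairwise distinct elements of ℂ ∖ {0,1}; define the linear polynomials in z: A₁ = (b−z)/(b−c), B₁ = (c−z)/(c−b), the constants a₁ = (a−b)/(b−c), b₁ = (a−c)/(c−b), and set P(z) = z(z−1)·A₁B₁(A₁b₁ − B₁a₁). Let B = ℂ[z,w₂,t₃,x]/(w₂³ − P(z), x³ − t₃(t₃+1)) be the coordinate ring of the product C₁ × F₁ of the affine curve C₁: w₂³ = P(z) and the affine curve F₁: x³ = t₃(t₃+1), let K = Frac(B), and let τ be the ℂ-algebra automorphism of K of order 3 determined by τ(w₂) = ω²·w₂,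 τ(x) = ω²·x, τ(z) = z, τ(t₃) = t₃ (the diagonal ℤ/3ℤ action). Then the fixed field K^τ is isomorphic as a ℂ-algebra to the function field Frac(ℂ[z,t₃,w₁]/(w₁³·P(z) − t₃(t₃+1))) of the affine surface S₂, an isomorphism being induced by w₁ ↦ x/w₂ (with z, t₃ unchanged). -/
/-!
Formalization conventions.

* The function field of an affine variety whose coordinate ring `ℂ[x₁,…,xₙ]/I` is an
  integral domain is formalized as `FractionRing` of that coordinate ring (for the total
  rings of fractions of the rings appearing here this is the function field).
* Two such varieties are birationally equivalent iff their function fields are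
  isomorphic as `ℂ`-algebras.
-/

noncomputable section
open MvPolynomial

/-- `A₁ = (b−z)/(b−c)` as a polynomial in the coordinates of `C₁ × F₁`
(`z = X 0`, `w₂ = X 1`, `t₃ = X 2`, `x = X 3`). -/
def A₁4 (b c : ℂ) : MvPolynomial (Fin 4) ℂ := C (b - c)⁻¹ * (C b - X 0)

/-- `B₁ = (c−z)/(c−b)`. -/
def B₁4 (b c : ℂ) : MvPolynomial (Fin 4) ℂ := C (c - b)⁻¹ * (C c - X 0)

/-- `P(z) = z(z−1)·A₁B₁(A₁b₁ − B₁a₁)` as a polynomial in `z = X 0`. -/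
def P4 (a b c : ℂ) : MvPolynomial (Fin 4) ℂ :=
  X 0 * (X 0 - 1) * A₁4 b c * B₁4 b c * (A₁4 b c * C (b₁ a b c) - B₁4 b c * C (a₁ a b c))

/-- Defining polynomial of the curve `C₁ : w₂³ = P(z)`, as an equation in `ℂ⁴`. -/
def pC₁ (a b c : ℂ) : MvPolynomial (Fin 4) ℂ := X 1 ^ 3 - P4 a b c

/-- Defining polynomial of the curve `F₁ : x³ = t₃(t₃+1)`, as an equation in `ℂ⁴`. -/
def pF₁4 : MvPolynomial (Fin 4) ℂ := X 3 ^ 3 - X 2 * (X 2 + 1)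

/-- `A₁` in the coordinates of `S₂` (`z = X 0`, `t₃ = X 1`, `w₁ = X 2`). -/
def A₁' (b c : ℂ) : MvPolynomial (Fin 3) ℂ := C (b - c)⁻¹ * (C b - X 0)

/-- `B₁` in the coordinates of `S₂`. -/
def B₁' (b c : ℂ) : MvPolynomial (Fin 3) ℂ := C (c - b)⁻¹ * (C c - X 0)

/-- Defining polynomial of the affine surface `S₂ : w₁³·P(z) = t₃(t₃+1)`. -/
def pS₂ (a b c : ℂ) : MvPolynomial (Fin 3) ℂ :=
  X 2 ^ 3 * (X 0 * (X 0 - 1) * A₁' b c * B₁' b c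
      * (A₁' b c * C (b₁ a b c) - B₁' b c * C (a₁ a b c)))
    - X 1 * (X 1 + 1)

/-!
Since `x = (x / w) * w`, the function field `K` of the curve product `wⁿ = P`, `xⁿ = Q` is
generated by the base, `w` and `v = x / w`, and `v` satisfies `P vⁿ = Q`. Hence
`K ≅ L[W] / (Wⁿ - P)`, where `L` is the function field of `P vⁿ = Q`, and the diagonal action
multiplies `W` by a primitive `n`-th root of unity `ζ` and fixes `L`. It multiplies the
coefficient of `Wⁱ` by `ζⁱ`, so an invariant element has only its `W⁰` coefficient: the
invariants are `L`.
-/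

open scoped nonZeroDivisors Polynomial

/-! ### Adjoining an `n`-th root -/

/-- The algebra `A[W] / (Wⁿ - u)` obtained from `A` by formally adjoining an `n`-th root of `u`. -/
abbrev AdjoinNthRoot (A : Type*) [CommRing A] (n : ℕ) (u : A) : Type _ :=
  AdjoinRoot (.X ^ n - .C u : Polynomial A)

namespace AdjoinNthRoot

variable {A : Type*} [CommRing A] {n : ℕ} {u : A}

variable (n u) in
/-- The adjoined `n`-th root `W` of `u`. -/
def root : AdjoinNthRoot A n u := AdjoinRoot.root _

theorem root_pow : root n u ^ n = algebraMap A _ u := by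
  have h := AdjoinRoot.eval₂_root (.X ^ n - .C u : Polynomial A)
  rwa [Polynomial.eval₂_sub, Polynomial.eval₂_X_pow, Polynomial.eval₂_C, sub_eq_zero] at h

theorem algebraMap_mul_root_pow (a : A) :
    (algebraMap A _ a * root n u) ^ n = algebraMap A _ (u * a ^ n) := by
  rw [mul_pow, root_pow, map_mul, map_pow, mul_comm]

theorem algebraMap_injective [NeZero n] :
    Function.Injective (algebraMap A (AdjoinNthRoot A n u)) := by
  nontriviality A
  refine (injective_iff_map_eq_zero _).mpr fun a ha => by_contra fun ha0 => ?_
  refine AdjoinRoot.mk_ne_zero_of_natDegree_lt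
    (Polynomial.monic_X_pow_sub_C u (NeZero.ne n)) (Polynomial.C_ne_zero.mpr ha0) ?_ ha
  rw [Polynomial.natDegree_C, Polynomial.natDegree_X_pow_sub_C]
  exact NeZero.pos n

section Lift

variable {R T : Type*} [CommRing R] [Algebra R A] [CommRing T] [Algebra R T]

/-- The universal property of `A[W] / (Wⁿ - u)`: the extension of `f` sending `W` to `y`. -/
def lift (f : A →ₐ[R] T) (y : T) (hy : y ^ n = f u) : AdjoinNthRoot A n u →ₐ[R] T :=
  AdjoinRoot.liftAlgHom _ f y (by simp [hy])

variable {f : A →ₐ[R] T} {y : T} {hy : y ^ n = f u}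

theorem lift_root : lift f y hy (root n u) = y := by
  rw [lift, root, AdjoinRoot.liftAlgHom_root]

theorem lift_algebraMap (a : A) : lift f y hy (algebraMap A _ a) = f a := by
  rw [lift, AdjoinRoot.algebraMap_eq, AdjoinRoot.liftAlgHom_of]

theorem algHom_ext {g₁ g₂ : AdjoinNthRoot A n u →ₐ[R] T}
    (h : g₁.comp (IsScalarTower.toAlgHom R A _) = g₂.comp (IsScalarTower.toAlgHom R A _))
    (h_root : g₁ (root n u) = g₂ (root n u)) : g₁ = g₂ :=
  AdjoinRoot.algHom_ext' h h_root

end Lift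

instance [NeZero n] [Nontrivial A] : Nontrivial (AdjoinNthRoot A n u) :=
  algebraMap_injective.nontrivial

theorem isUnit_root [NeZero n] (hu : IsUnit u) : IsUnit (root n u) := by
  rw [← isUnit_pow_iff (NeZero.ne n), root_pow]
  exact hu.map _

section ScaleRoot

variable {k : Type*} [CommRing k] [Algebra k A]

theorem smul_root_pow (ε : rootsOfUnity n k) :
    (((ε : kˣ) : k) • root n u) ^ n = Algebra.ofId A (AdjoinNthRoot A n u) u := by
  have hε : ((ε : kˣ) : k) ^ n = 1 := (mem_rootsOfUnity' n _).mp ε.2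
  rw [smul_pow, hε, one_smul, root_pow, Algebra.ofId_apply]

variable (n u k) in
/-- The action `W ↦ ε W` of the `n`-th roots of unity on `A[W] / (Wⁿ - u)`, by endomorphisms; an
auxiliary step towards `scaleRoot`. -/
def scaleRootHom : rootsOfUnity n k →* (AdjoinNthRoot A n u →ₐ[A] AdjoinNthRoot A n u) where
  toFun ε := lift (Algebra.ofId A _) (((ε : kˣ) : k) • root n u) (smul_root_pow ε)
  map_one' := AdjoinRoot.algHom_ext <| lift_root.trans (one_smul k _)
  map_mul' ε δ := AdjoinRoot.algHom_ext <| by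
    change lift _ _ (smul_root_pow _) (root n u) =
      lift _ _ (smul_root_pow ε) (lift _ _ (smul_root_pow δ) (root n u))
    rw [lift_root, lift_root, AlgHom.map_smul_of_tower, lift_root, smul_smul, mul_comm]
    rfl

variable (n u k) in
/-- The action `W ↦ ε W` of the `n`-th roots of unity on `A[W] / (Wⁿ - u)`, by automorphisms. -/
def scaleRoot : rootsOfUnity n k →* (AdjoinNthRoot A n u ≃ₐ[A] AdjoinNthRoot A n u) :=
  (AlgEquiv.algHomUnitsEquiv _ _).toMonoidHom.comp (scaleRootHom n u k).toHomUnits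

theorem scaleRoot_root (ε : rootsOfUnity n k) :
    scaleRoot n u k ε (root n u) = ((ε : kˣ) : k) • root n u :=
  lift_root (hy := smul_root_pow ε)

theorem scaleRoot_injective {k : Type*} [Field k] [Algebra k A] [NeZero n] (hu : u ≠ 0) :
    Function.Injective (scaleRoot n u k) := by
  have root_ne_zero : root n u ≠ 0 := fun h0 => by
    have h := root_pow (A := A) (n := n) (u := u)
    rw [h0, zero_pow (NeZero.ne n), eq_comm, map_eq_zero_iff _ algebraMap_injective] at h
    exact hu h
  intro ε δ h
  have h' := DFunLike.congr_fun h (root n u)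
  rw [scaleRoot_root, scaleRoot_root] at h'
  exact Subtype.ext <| Units.ext <| smul_left_injective k root_ne_zero h'

end ScaleRoot

end AdjoinNthRoot

section PowerBasis

variable {k A E : Type*} [CommRing k] [CommRing A] [Algebra k A] [CommRing E]
  [Algebra A E] [Algebra k E] [IsScalarTower k A E] (pb : PowerBasis A E) {ζ : k}
  {σ : E →ₐ[A] E}

theorem repr_map_of_map_gen_eq_smul (hσ : σ pb.gen = ζ • pb.gen) (y : E) (i : Fin pb.dim) :
    pb.basis.repr (σ y) i = ζ ^ (i : ℕ) • pb.basis.repr y i := by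
  suffices h : pb.basis.coord i ∘ₗ σ.toLinearMap = ζ ^ (i : ℕ) • pb.basis.coord i from
    LinearMap.congr_fun h y
  refine pb.basis.ext fun j => ?_
  have hσ_basis : σ (pb.basis j) = ζ ^ (j : ℕ) • pb.basis j := by
    rw [pb.basis_eq_pow, map_pow, hσ, smul_pow]
  rcases eq_or_ne j i with rfl | hji
  · simp only [LinearMap.comp_apply, AlgHom.toLinearMap_apply, LinearMap.smul_apply, hσ_basis,
      LinearMap.map_smul_of_tower]
  · simp only [LinearMap.comp_apply, AlgHom.toLinearMap_apply, LinearMap.smul_apply, hσ_basis,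
      LinearMap.map_smul_of_tower, Module.Basis.coord_apply, Module.Basis.repr_self,
      Finsupp.single_eq_of_ne' hji, smul_zero]

theorem mem_range_algebraMap_of_map_eq_self [IsDomain k] [Module.IsTorsionFree k A]
    (hζ : IsPrimitiveRoot ζ pb.dim) (hσ : σ pb.gen = ζ • pb.gen) {y : E} (hy : σ y = y) :
    y ∈ Set.range (algebraMap A E) := by
  have repr_eq_zero (i : Fin pb.dim) (hi : (i : ℕ) ≠ 0) : pb.basis.repr y i = 0 := by
    have h := repr_map_of_map_gen_eq_smul pb hσ y i
    rw [hy, eq_comm, ← sub_eq_zero] at h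
    have h' : (ζ ^ (i : ℕ) - 1) • pb.basis.repr y i = 0 := by rw [sub_smul, one_smul, h]
    exact (smul_eq_zero.mp h').resolve_left (sub_ne_zero.mpr <| hζ.pow_ne_one_of_pos_of_lt hi i.2)
  rw [← pb.basis.sum_repr y]
  refine Subalgebra.sum_mem (⊥ : Subalgebra A E) fun i _ => ?_
  by_cases hi : (i : ℕ) = 0
  · rw [pb.basis_eq_pow, hi, pow_zero]
    exact Subalgebra.smul_mem _ (one_mem _) _
  · rw [repr_eq_zero i hi, zero_smul]
    exact zero_mem _

end PowerBasis

namespace AdjoinNthRoot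

variable {k L : Type*} [Field k] [CommRing L] [Algebra k L]
  {n : ℕ} {u : L} {ζ : k}

theorem orderOf_scaleRoot [NeZero n] (hu : u ≠ 0) (hζ : IsPrimitiveRoot ζ n) :
    orderOf (scaleRoot n u k hζ.toRootsOfUnity) = n := by
  rw [orderOf_injective _ (scaleRoot_injective hu), ← Subgroup.orderOf_coe, ← orderOf_units]
  exact hζ.eq_orderOf.symm

theorem scaleRoot_eq_self_iff [Nontrivial L] [NeZero n] (hζ : IsPrimitiveRoot ζ n)
    {y : AdjoinNthRoot L n u} :
    scaleRoot n u k hζ.toRootsOfUnity y = y ↔ y ∈ Set.range (algebraMap L _) := by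
  refine ⟨fun hy => ?_, ?_⟩
  · let pb := AdjoinRoot.powerBasis' (Polynomial.monic_X_pow_sub_C u (NeZero.ne n))
    refine mem_range_algebraMap_of_map_eq_self pb (ζ := ζ)
      (σ := (scaleRoot n u k hζ.toRootsOfUnity).toAlgHom) ?_ (scaleRoot_root _) hy
    rwa [AdjoinRoot.powerBasis'_dim, Polynomial.natDegree_X_pow_sub_C]
  · rintro ⟨l, rfl⟩
    exact AlgEquiv.commutes _ l

variable {K : Type*} [CommRing K] [Algebra k K]

theorem exists_orderOf_eq_and_equalizer [NeZero n] (hu : u ≠ 0) (hζ : IsPrimitiveRoot ζ n)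
    (e : AdjoinNthRoot L n u ≃ₐ[k] K) :
    ∃ τ : K ≃ₐ[k] K, orderOf τ = n ∧
      τ (e (root n u)) = ζ • e (root n u) ∧
      ∃ ψ : L ≃ₐ[k] AlgHom.equalizer τ.toAlgHom (AlgHom.id k K),
        ∀ l, (ψ l : K) = e (algebraMap L _ l) := by
  have := nontrivial_of_ne u 0 hu
  let σ := scaleRoot n u k hζ.toRootsOfUnity
  let τ : K ≃ₐ[k] K := AlgEquiv.autCongr e (σ.restrictScalarsHom k)
  have τ_apply (y : AdjoinNthRoot L n u) : τ (e y) = e (σ y) := by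
    simp [τ]
  let ι : L →ₐ[k] K := e.toAlgHom.comp (IsScalarTower.toAlgHom k L _)
  have ι_injective : Function.Injective ι := e.injective.comp algebraMap_injective
  have range_ι : ι.range = AlgHom.equalizer τ.toAlgHom (AlgHom.id k K) := by
    ext y
    obtain ⟨y, rfl⟩ := e.surjective y
    calc e y ∈ ι.range ↔ y ∈ Set.range (algebraMap L (AdjoinNthRoot L n u)) := by
          simp [ι]
      _ ↔ σ y = y := (scaleRoot_eq_self_iff hζ).symm
      _ ↔ τ (e y) = e y := by rw [τ_apply, e.injective.eq_iff]
  refine ⟨τ, ?_, ?_, (AlgEquiv.ofInjective ι ι_injective).trans (Subalgebra.equivOfEq _ _ range_ι),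
    fun l => rfl⟩
  · calc orderOf τ = orderOf (σ.restrictScalarsHom k) := MulEquiv.orderOf_eq _ _
      _ = orderOf σ :=
          orderOf_injective _ (AlgEquiv.restrictScalarsHom_injective k) _
      _ = n := orderOf_scaleRoot hu hζ
  · have σ_root : σ (root n u) = ζ • root n u :=
      scaleRoot_root hζ.toRootsOfUnity
    rw [τ_apply, σ_root, map_smul]

end AdjoinNthRoot

/-! ### The function field of the product as a Kummer extension -/

section FractionRing

variable {R A F T : Type*} [CommRing R] [CommRing A] [Algebra R A] [CommRing F] [Algebra A F]
  [Algebra R F] [IsScalarTower R A F] [IsFractionRing A F] [CommRing T] [Algebra R T]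

theorem isUnit_map_of_mem_nonZeroDivisors [Algebra.IsAlgebraic R A]
    (hT : ∀ r : R, r ≠ 0 → IsUnit (algebraMap R T r)) (f : A →ₐ[R] T) {a : A} (ha : a ∈ A⁰) :
    IsUnit (f a) := by
  obtain ⟨r, hr, a_dvd_r⟩ := (Algebra.IsAlgebraic.isAlgebraic (R := R) a).exists_nonzero_dvd ha
  exact isUnit_of_dvd_unit (map_dvd f a_dvd_r) (by simpa only [AlgHom.commutes] using hT r hr)

variable (A F) in
theorem isUnit_algebraMap_of_isFractionRing [NoZeroDivisors R] [Module.IsTorsionFree R A] {r : R}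
    (hr : r ≠ 0) : IsUnit (algebraMap R F r) := by
  rw [IsScalarTower.algebraMap_apply R A F]
  refine IsLocalization.map_units (M := A⁰) F ⟨algebraMap R A r, ?_⟩
  rw [mem_nonZeroDivisors_iff_right]
  intro a ha
  rw [mul_comm, ← Algebra.smul_def] at ha
  exact (smul_eq_zero_iff_right hr).mp ha

variable [Algebra.IsAlgebraic R A]

variable (F) in
/-- The extension of `f` to a total ring of fractions `F` of `A`. As `A` is algebraic over `R`, it
is enough that nonzero elements of `R` become units in `T`. -/
def fractionRingLift (hT : ∀ r : R, r ≠ 0 → IsUnit (algebraMap R T r)) (f : A →ₐ[R] T) :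
    F →ₐ[R] T :=
  IsLocalization.liftAlgHom (M := A⁰) (f := f) fun a =>
    isUnit_map_of_mem_nonZeroDivisors hT f a.2

theorem fractionRingLift_algebraMap (hT : ∀ r : R, r ≠ 0 → IsUnit (algebraMap R T r))
    (f : A →ₐ[R] T) (a : A) : fractionRingLift F hT f (algebraMap A F a) = f a :=
  IsLocalization.lift_eq _ a

end FractionRing

section Kummer

variable {R : Type*} [CommRing R]

/-- The algebra `R[w, x] / (wⁿ - P, xⁿ - Q)`, built by adjoining the two roots successively: the
coordinate ring of the product of two cyclic covers. -/
abbrev KummerProd (n : ℕ) (P Q : R) : Type _ :=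
  AdjoinNthRoot (AdjoinNthRoot R n P) n (algebraMap R _ Q)

namespace KummerProd

variable {n : ℕ} {P Q : R}

variable (n P Q) in
/-- The adjoined root `w` of `P`. -/
def w : KummerProd n P Q := algebraMap (AdjoinNthRoot R n P) _ (AdjoinNthRoot.root n P)

variable (n P Q) in
/-- The adjoined root `x` of `Q`. -/
def x : KummerProd n P Q := AdjoinNthRoot.root n _

theorem w_pow : w n P Q ^ n = algebraMap R _ P := by
  rw [w, ← map_pow, AdjoinNthRoot.root_pow, ← IsScalarTower.algebraMap_apply]

theorem x_pow : x n P Q ^ n = algebraMap R _ Q := by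
  rw [x, AdjoinNthRoot.root_pow, ← IsScalarTower.algebraMap_apply]

section Lift

variable {k T : Type*} [CommRing k] [Algebra k R] [CommRing T] [Algebra k T]

/-- The universal property of `R[w, x] / (wⁿ - P, xⁿ - Q)`: the extension of `f` sending `w` to `y₁`
and `x` to `y₂`. -/
def lift (f : R →ₐ[k] T) (y₁ y₂ : T) (h₁ : y₁ ^ n = f P) (h₂ : y₂ ^ n = f Q) :
    KummerProd n P Q →ₐ[k] T :=
  AdjoinNthRoot.lift (AdjoinNthRoot.lift f y₁ h₁) y₂ <| by
    rw [h₂, AdjoinNthRoot.lift_algebraMap]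

variable {f : R →ₐ[k] T} {y₁ y₂ : T} {h₁ : y₁ ^ n = f P} {h₂ : y₂ ^ n = f Q}

theorem lift_w : lift f y₁ y₂ h₁ h₂ (w n P Q) = y₁ :=
  (AdjoinNthRoot.lift_algebraMap _).trans AdjoinNthRoot.lift_root

theorem lift_x : lift f y₁ y₂ h₁ h₂ (x n P Q) = y₂ :=
  AdjoinNthRoot.lift_root

theorem lift_algebraMap (r : R) : lift f y₁ y₂ h₁ h₂ (algebraMap R _ r) = f r :=
  (AdjoinNthRoot.lift_algebraMap _).trans (AdjoinNthRoot.lift_algebraMap r)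

theorem algHom_ext {g₁ g₂ : KummerProd n P Q →ₐ[k] T}
    (h : g₁.comp (IsScalarTower.toAlgHom k R _) = g₂.comp (IsScalarTower.toAlgHom k R _))
    (hw : g₁ (w n P Q) = g₂ (w n P Q)) (hx : g₁ (x n P Q) = g₂ (x n P Q)) : g₁ = g₂ :=
  AdjoinNthRoot.algHom_ext
    (AdjoinNthRoot.algHom_ext (AlgHom.ext fun r => DFunLike.congr_fun h r) hw) hx

end Lift

variable [NeZero n]

instance [Nontrivial R] : Algebra.IsAlgebraic R (KummerProd n P Q) := by
  have h₁ := (Polynomial.monic_X_pow_sub_C P (NeZero.ne n)).finite_adjoinRoot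
  have h₂ := (Polynomial.monic_X_pow_sub_C
    (algebraMap R (AdjoinNthRoot R n P) Q) (NeZero.ne n)).finite_adjoinRoot
  have := Module.Finite.trans (R := R) (AdjoinNthRoot R n P) (KummerProd n P Q)
  infer_instance

instance [IsDomain R] : Module.IsTorsionFree R (KummerProd n P Q) := by
  have h₁ := (Polynomial.monic_X_pow_sub_C P (NeZero.ne n)).free_adjoinRoot
  have h₂ := (Polynomial.monic_X_pow_sub_C
    (algebraMap R (AdjoinNthRoot R n P) Q) (NeZero.ne n)).free_adjoinRoot
  have := Module.Free.trans (R := R) (S := AdjoinNthRoot R n P) (M := KummerProd n P Q)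
  infer_instance

end KummerProd

/-- The algebra `R[v] / (P vⁿ - Q)`: a model of the quotient of `wⁿ = P`, `xⁿ = Q` by the diagonal
action of the `n`-th roots of unity, with `v` in the role of `x / w`. -/
abbrev KummerQuot (n : ℕ) (P Q : R) : Type _ := AdjoinRoot (.C P * .X ^ n - .C Q : Polynomial R)

namespace KummerQuot

variable {n : ℕ} {P Q : R}

variable (n P Q) in
/-- The class of the variable `v`. -/
def v : KummerQuot n P Q := AdjoinRoot.root _

theorem mul_v_pow : algebraMap R _ P * v n P Q ^ n = algebraMap R _ Q := by
  have h := AdjoinRoot.eval₂_root (.C P * .X ^ n - .C Q : Polynomial R)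
  rwa [Polynomial.eval₂_sub, Polynomial.eval₂_mul, Polynomial.eval₂_X_pow, Polynomial.eval₂_C,
    Polynomial.eval₂_C, sub_eq_zero] at h

section Lift

variable {k T : Type*} [CommRing k] [Algebra k R] [CommRing T] [Algebra k T]

/-- The universal property of `R[v] / (P vⁿ - Q)`: the extension of `f` sending `v` to `y`. -/
def lift (f : R →ₐ[k] T) (y : T) (hy : f P * y ^ n = f Q) : KummerQuot n P Q →ₐ[k] T :=
  AdjoinRoot.liftAlgHom _ f y (by simp [hy])

variable {f : R →ₐ[k] T} {y : T} {hy : f P * y ^ n = f Q}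

theorem lift_v : lift f y hy (v n P Q) = y := by
  rw [lift, v, AdjoinRoot.liftAlgHom_root]

theorem lift_algebraMap (r : R) : lift f y hy (algebraMap R _ r) = f r := by
  rw [lift, AdjoinRoot.algebraMap_eq, AdjoinRoot.liftAlgHom_of]

theorem algHom_ext {g₁ g₂ : KummerQuot n P Q →ₐ[k] T}
    (h : g₁.comp (IsScalarTower.toAlgHom k R _) = g₂.comp (IsScalarTower.toAlgHom k R _))
    (hv : g₁ (v n P Q) = g₂ (v n P Q)) : g₁ = g₂ :=
  AdjoinRoot.algHom_ext' h hv

end Lift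

end KummerQuot

open KummerProd KummerQuot

section FunctionField

variable {n : ℕ} {P Q : R} (L K : Type*) [CommRing L] [Algebra R L]
  [Algebra (KummerQuot n P Q) L] [IsScalarTower R (KummerQuot n P Q) L] [CommRing K] [Algebra R K]
  [Algebra (KummerProd n P Q) K] [IsScalarTower R (KummerProd n P Q) K]

theorem KummerProd.algebraMap_w_pow :
    algebraMap (KummerProd n P Q) K (w n P Q) ^ n = algebraMap R K P := by
  rw [← map_pow, w_pow, ← IsScalarTower.algebraMap_apply]

theorem KummerProd.algebraMap_x_pow :
    algebraMap (KummerProd n P Q) K (x n P Q) ^ n = algebraMap R K Q := by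
  rw [← map_pow, x_pow, ← IsScalarTower.algebraMap_apply]

theorem KummerQuot.mul_algebraMap_v_pow :
    algebraMap R L P * algebraMap (KummerQuot n P Q) L (v n P Q) ^ n = algebraMap R L Q := by
  rw [IsScalarTower.algebraMap_apply R (KummerQuot n P Q) L, ← map_pow, ← map_mul, mul_v_pow,
    ← IsScalarTower.algebraMap_apply]

variable (n P Q) in
/-- The function `x / w` in a total ring of fractions `K` of `R[w, x] / (wⁿ - P, xⁿ - Q)`. As `K` is
not assumed to be a field, `Ring.inverse` is used; its junk value `0` does not occur for `P ≠ 0`. -/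
def KummerProd.ratio : K :=
  algebraMap (KummerProd n P Q) K (x n P Q) *
    Ring.inverse (algebraMap (KummerProd n P Q) K (w n P Q))

variable [IsDomain R] [NeZero n]

section OfKummerExtension

variable [IsFractionRing (KummerProd n P Q) K]

theorem KummerProd.ratio_mul_w (hP : P ≠ 0) :
    ratio n P Q K * algebraMap (KummerProd n P Q) K (w n P Q) =
      algebraMap (KummerProd n P Q) K (x n P Q) := by
  have w_isUnit : IsUnit (algebraMap (KummerProd n P Q) K (w n P Q)) := by
    rw [← isUnit_pow_iff (NeZero.ne n), algebraMap_w_pow]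
    exact isUnit_algebraMap_of_isFractionRing (KummerProd n P Q) K hP
  rw [ratio, mul_assoc, Ring.inverse_mul_cancel _ w_isUnit, mul_one]

theorem KummerProd.mul_ratio_pow (hP : P ≠ 0) :
    algebraMap R K P * ratio n P Q K ^ n = algebraMap R K Q := by
  rw [← algebraMap_w_pow (n := n) (Q := Q), mul_comm, ← mul_pow, ratio_mul_w K hP,
    algebraMap_x_pow]

variable [Algebra.IsAlgebraic R (KummerQuot n P Q)] [IsFractionRing (KummerQuot n P Q) L]

variable (Q) in
/-- The map `L[W] / (Wⁿ - P) → K` with `W ↦ w` and `v ↦ x / w`, where `L` and `K` are the total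
rings of fractions of `KummerQuot n P Q` and `KummerProd n P Q`. -/
def ofKummerExtension (hP : P ≠ 0) : AdjoinNthRoot L n (algebraMap R L P) →ₐ[R] K :=
  AdjoinNthRoot.lift
    (fractionRingLift L
      (fun _ => isUnit_algebraMap_of_isFractionRing (KummerProd n P Q) K)
      (KummerQuot.lift (Algebra.ofId R K) (ratio n P Q K) (mul_ratio_pow K hP)))
    (algebraMap (KummerProd n P Q) K (w n P Q))
    (by rw [algebraMap_w_pow, AlgHom.commutes])

theorem ofKummerExtension_root (hP : P ≠ 0) :
    ofKummerExtension Q L K hP (AdjoinNthRoot.root n _) =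
      algebraMap (KummerProd n P Q) K (w n P Q) :=
  AdjoinNthRoot.lift_root

theorem ofKummerExtension_v (hP : P ≠ 0) :
    ofKummerExtension (n := n) Q L K hP
        (algebraMap L _ (algebraMap (KummerQuot n P Q) L (v n P Q))) = ratio n P Q K :=
  (AdjoinNthRoot.lift_algebraMap _).trans <|
    (fractionRingLift_algebraMap _ _ _).trans KummerQuot.lift_v

end OfKummerExtension

section ToKummerExtension

variable [Module.IsTorsionFree R (KummerQuot n P Q)] [IsFractionRing (KummerQuot n P Q) L]
  [IsFractionRing (KummerProd n P Q) K]

variable (n P Q) in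
/-- The map `K → L[W] / (Wⁿ - P)` with `w ↦ W` and `x ↦ v W`, inverse to `ofKummerExtension`. -/
def toKummerExtension : K →ₐ[R] AdjoinNthRoot L n (algebraMap R L P) :=
  fractionRingLift (A := KummerProd n P Q) K
    (fun r hr => by
      rw [IsScalarTower.algebraMap_apply R L]
      exact (isUnit_algebraMap_of_isFractionRing (KummerQuot n P Q) L hr).map (algebraMap L _))
    (KummerProd.lift (Algebra.ofId R _) (AdjoinNthRoot.root n _)
      (algebraMap L _ (algebraMap (KummerQuot n P Q) L (v n P Q)) * AdjoinNthRoot.root n _)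
      (by rw [AdjoinNthRoot.root_pow, Algebra.ofId_apply, ← IsScalarTower.algebraMap_apply])
      (by
        rw [AdjoinNthRoot.algebraMap_mul_root_pow, mul_algebraMap_v_pow, Algebra.ofId_apply,
          ← IsScalarTower.algebraMap_apply]))

theorem toKummerExtension_w :
    toKummerExtension n P Q L K (algebraMap (KummerProd n P Q) K (w n P Q)) =
      AdjoinNthRoot.root n _ :=
  (fractionRingLift_algebraMap _ _ _).trans KummerProd.lift_w

theorem toKummerExtension_x :
    toKummerExtension n P Q L K (algebraMap (KummerProd n P Q) K (x n P Q)) =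
      algebraMap L _ (algebraMap (KummerQuot n P Q) L (v n P Q)) * AdjoinNthRoot.root n _ :=
  (fractionRingLift_algebraMap _ _ _).trans KummerProd.lift_x

theorem toKummerExtension_ratio (hP : P ≠ 0) :
    toKummerExtension n P Q L K (ratio n P Q K) =
      algebraMap L _ (algebraMap (KummerQuot n P Q) L (v n P Q)) := by
  have root_isUnit : IsUnit (AdjoinNthRoot.root n (algebraMap R L P)) :=
    AdjoinNthRoot.isUnit_root (isUnit_algebraMap_of_isFractionRing (KummerQuot n P Q) L hP)
  rw [← root_isUnit.mul_left_inj, ← toKummerExtension_x L K, ← ratio_mul_w K hP, map_mul,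
    toKummerExtension_w]

variable [Algebra.IsAlgebraic R (KummerQuot n P Q)]

theorem ofKummerExtension_comp_toKummerExtension (hP : P ≠ 0) :
    (ofKummerExtension Q L K hP).comp (toKummerExtension n P Q L K) = AlgHom.id R K := by
  have map_w : ofKummerExtension Q L K hP (toKummerExtension n P Q L K
      (algebraMap (KummerProd n P Q) K (w n P Q))) = algebraMap _ K (w n P Q) := by
    rw [toKummerExtension_w, ofKummerExtension_root]
  have map_x : ofKummerExtension Q L K hP (toKummerExtension n P Q L K
      (algebraMap (KummerProd n P Q) K (x n P Q))) = algebraMap _ K (x n P Q) := by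
    rw [toKummerExtension_x, map_mul, ofKummerExtension_v, ofKummerExtension_root,
      ratio_mul_w K hP]
  exact IsLocalization.algHom_ext (W := (KummerProd n P Q)⁰)
    (KummerProd.algHom_ext (Subsingleton.elim _ _) map_w map_x)

theorem toKummerExtension_comp_ofKummerExtension (hP : P ≠ 0) :
    (toKummerExtension n P Q L K).comp (ofKummerExtension (n := n) Q L K hP) = AlgHom.id R _ := by
  have map_v : toKummerExtension n P Q L K (ofKummerExtension (n := n) Q L K hP
      (algebraMap L _ (algebraMap (KummerQuot n P Q) L (v n P Q)))) =
        algebraMap L _ (algebraMap (KummerQuot n P Q) L (v n P Q)) := by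
    rw [ofKummerExtension_v, toKummerExtension_ratio L K hP]
  have map_root : toKummerExtension n P Q L K (ofKummerExtension (n := n) Q L K hP
      (AdjoinNthRoot.root n _)) = AdjoinNthRoot.root n _ := by
    rw [ofKummerExtension_root, toKummerExtension_w]
  exact AdjoinNthRoot.algHom_ext (IsLocalization.algHom_ext (W := (KummerQuot n P Q)⁰)
    (KummerQuot.algHom_ext (Subsingleton.elim _ _) map_v)) map_root

variable (Q) in
/-- The Kummer presentation `L[W] / (Wⁿ - P) ≅ K` of the function field `K` of the product over the
function field `L` of the quotient, with `W ↦ w` and `v ↦ x / w`. -/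
def kummerExtensionEquiv (hP : P ≠ 0) : AdjoinNthRoot L n (algebraMap R L P) ≃ₐ[R] K :=
  AlgEquiv.ofAlgHom (ofKummerExtension Q L K hP) (toKummerExtension n P Q L K)
    (ofKummerExtension_comp_toKummerExtension L K hP)
    (toKummerExtension_comp_ofKummerExtension L K hP)

theorem kummerExtensionEquiv_v_mul_w (hP : P ≠ 0) :
    kummerExtensionEquiv (n := n) Q L K hP
        (algebraMap L _ (algebraMap (KummerQuot n P Q) L (v n P Q))) *
      algebraMap (KummerProd n P Q) K (w n P Q) = algebraMap (KummerProd n P Q) K (x n P Q) :=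
  (congrArg (· * _) (ofKummerExtension_v L K hP)).trans (ratio_mul_w K hP)

variable {k F : Type*} [Field k] [Algebra k R] [Algebra k L] [IsScalarTower k R L]
  [Algebra k K] [IsScalarTower k R K] [CommRing F] [Algebra k F]

theorem exists_kummer_action {ζ : k} (hP : P ≠ 0) (hζ : IsPrimitiveRoot ζ n) (e : K ≃ₐ[k] F) :
    ∃ τ : F ≃ₐ[k] F, orderOf τ = n ∧
      τ (e (algebraMap (KummerProd n P Q) K (w n P Q))) =
        ζ • e (algebraMap (KummerProd n P Q) K (w n P Q)) ∧
      ∃ ψ : L ≃ₐ[k] AlgHom.equalizer τ.toAlgHom (AlgHom.id k F),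
        (ψ (algebraMap (KummerQuot n P Q) L (v n P Q)) : F) *
            e (algebraMap (KummerProd n P Q) K (w n P Q)) =
          e (algebraMap (KummerProd n P Q) K (x n P Q)) ∧
        ∀ r : R, (ψ (algebraMap R L r) : F) = e (algebraMap R K r) := by
  let ε := kummerExtensionEquiv (n := n) Q L K hP
  have : Nontrivial K := (IsFractionRing.injective (KummerProd n P Q) K).nontrivial
  have : Nontrivial (AdjoinNthRoot L n (algebraMap R L P)) := ε.toEquiv.nontrivial
  have : Nontrivial L := (algebraMap L (AdjoinNthRoot L n (algebraMap R L P))).domain_nontrivial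
  have P_ne_zero : algebraMap R L P ≠ 0 :=
    (isUnit_algebraMap_of_isFractionRing (KummerQuot n P Q) L hP).ne_zero
  obtain ⟨τ, orderOf_τ, τ_root, ψ, ψ_apply⟩ := AdjoinNthRoot.exists_orderOf_eq_and_equalizer
    P_ne_zero hζ ((ε.restrictScalars k).trans e)
  refine ⟨τ, orderOf_τ, ?_, ψ, ?_, fun r => ?_⟩
  · have ε_root : ε (AdjoinNthRoot.root n _) = algebraMap _ K (w n P Q) :=
      ofKummerExtension_root L K hP
    rwa [← ε_root]
  · rw [ψ_apply, ← kummerExtensionEquiv_v_mul_w L K hP, map_mul]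
    rfl
  · rw [ψ_apply]
    exact congrArg e ((congrArg ε (IsScalarTower.algebraMap_apply R L _ r).symm).trans
      (ε.commutes r))

end ToKummerExtension

end FunctionField

end Kummer

/-! ### Torsion-freeness and algebraicity of the quotient -/

theorem exists_eq_C_of_dvd_C {R : Type*} [CommRing R] [NoZeroDivisors R] {d : R[X]}
    {r : R} (hr : r ≠ 0) (h : d ∣ .C r) : ∃ s, Polynomial.C s = d := by
  refine Polynomial.natDegree_eq_zero.mp (Nat.le_zero.mp ?_)
  exact (Polynomial.natDegree_le_of_dvd h (Polynomial.C_ne_zero.mpr hr)).trans_eq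
    (Polynomial.natDegree_C r)

theorem isTorsionFree_adjoinRoot {R : Type*} [CommRing R] [IsDomain R]
    [UniqueFactorizationMonoid R] {f : R[X]} (hf : f.IsPrimitive) :
    Module.IsTorsionFree R (AdjoinRoot f) := by
  refine .of_smul_eq_zero fun r a hra => or_iff_not_imp_left.mpr fun hr => ?_
  obtain ⟨g, rfl⟩ := AdjoinRoot.mk_surjective a
  have f_relPrime : IsRelPrime f (.C r) := by
    intro d hdf hdr
    obtain ⟨s, rfl⟩ := exists_eq_C_of_dvd_C hr hdr
    exact (Polynomial.isPrimitive_iff_isUnit_of_C_dvd.mp hf s hdf).map _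
  rw [AdjoinRoot.smul_mk, AdjoinRoot.mk_eq_zero, Polynomial.smul_eq_C_mul] at hra
  exact AdjoinRoot.mk_eq_zero.mpr (f_relPrime.dvd_of_dvd_mul_left hra)

theorem isPrimitive_C_mul_X_pow_sub_C {R : Type*} [CommRing R] {n : ℕ} [NeZero n] {P Q : R}
    (h : IsRelPrime P Q) : (.C P * .X ^ n - .C Q : R[X]).IsPrimitive := by
  refine Polynomial.isPrimitive_iff_isUnit_of_C_dvd.mpr fun r hr => ?_
  rw [Polynomial.C_dvd_iff_dvd_coeff] at hr
  refine h ?_ ?_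
  · simpa [Polynomial.coeff_C_of_ne_zero (NeZero.ne n)] using hr n
  · simpa [(NeZero.ne n).symm, Polynomial.coeff_X_pow] using hr 0

theorem isAlgebraic_adjoinRoot {R : Type*} [CommRing R] [IsDomain R] {f : R[X]} (hf : f ≠ 0) :
    Algebra.IsAlgebraic R (AdjoinRoot f) := by
  rw [Algebra.isAlgebraic_iff, ← AdjoinRoot.adjoinRoot_eq_top]
  refine Algebra.isAlgebraic_adjoin_singleton_iff.mpr ⟨f, hf, ?_⟩
  rw [AdjoinRoot.aeval_eq, AdjoinRoot.mk_self]

namespace KummerQuot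

variable {R : Type*} [CommRing R] [IsDomain R] {n : ℕ} [NeZero n] {P Q : R}

theorem isTorsionFree [UniqueFactorizationMonoid R] (h : IsRelPrime P Q) :
    Module.IsTorsionFree R (KummerQuot n P Q) :=
  isTorsionFree_adjoinRoot (isPrimitive_C_mul_X_pow_sub_C h)

theorem isAlgebraic (h : IsRelPrime P Q) : Algebra.IsAlgebraic R (KummerQuot n P Q) :=
  isAlgebraic_adjoinRoot (isPrimitive_C_mul_X_pow_sub_C h).ne_zero

end KummerQuot

theorem isRelPrime_C_map_C {k : Type*} [Field k] {p q : k[X]} (hp : p ≠ 0) (hq : q ≠ 0) :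
    IsRelPrime (.C p : k[X][X]) (q.map Polynomial.C) := by
  intro d hdp hdq
  obtain ⟨e, rfl⟩ := exists_eq_C_of_dvd_C hp hdp
  have e_dvd := (Polynomial.C_dvd_iff_dvd_coeff _ _).mp hdq q.natDegree
  rw [Polynomial.coeff_map] at e_dvd
  refine (isUnit_of_dvd_unit e_dvd ?_).map _
  exact (isUnit_iff_ne_zero.mpr (Polynomial.leadingCoeff_ne_zero.mpr hq)).map _

/-! ### The coordinate rings -/

section CoordinateRing

/-- The equation `w₂ⁿ - p(z)` of a cyclic cover of the `z`-line, in the coordinates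
`z, w₂, t₃, x`. -/
def wEq (n : ℕ) (p : ℂ[X]) : MvPolynomial (Fin 4) ℂ := X 1 ^ n - Polynomial.aeval (X 0) p

/-- The equation `xⁿ - q(t₃)` of a cyclic cover of the `t₃`-line, in the coordinates
`z, w₂, t₃, x`. -/
def xEq (n : ℕ) (q : ℂ[X]) : MvPolynomial (Fin 4) ℂ := X 3 ^ n - Polynomial.aeval (X 2) q

/-- The equation `w₁ⁿ p(z) - q(t₃)` of the quotient surface, in the coordinates `z, t₃, w₁`. -/
def quotEq (n : ℕ) (p q : ℂ[X]) : MvPolynomial (Fin 3) ℂ :=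
  X 2 ^ n * Polynomial.aeval (X 0) p - Polynomial.aeval (X 1) q

section Coord

variable {σ k T : Type*} [CommRing k] {s : Set (MvPolynomial σ k)} [CommRing T] [Algebra k T]

variable (s) in
/-- The `i`-th coordinate function on the affine variety cut out by `s`. -/
def coord (i : σ) : MvPolynomial σ k ⧸ Ideal.span s := Ideal.Quotient.mk _ (X i)

theorem aeval_coord {f : MvPolynomial σ k} (hf : f ∈ s) : aeval (coord s) f = 0 := by
  have aeval_eq_mk : aeval (coord s) = Ideal.Quotient.mkₐ k (Ideal.span s) :=
    (aeval_unique (Ideal.Quotient.mkₐ k (Ideal.span s))).symm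
  rw [aeval_eq_mk]
  exact Ideal.Quotient.eq_zero_iff_mem.mpr (Ideal.subset_span hf)

/-- The algebra homomorphism out of the coordinate ring of the variety cut out by `s` that is given
by the `T`-valued point `y`. -/
def coordLift (y : σ → T) (hy : ∀ f ∈ s, aeval y f = 0) :
    (MvPolynomial σ k ⧸ Ideal.span s) →ₐ[k] T :=
  Ideal.Quotient.liftₐ _ (aeval y) fun _ hf =>
    (Ideal.span_le (I := RingHom.ker (aeval y))).mpr hy hf

theorem coordLift_coord {y : σ → T} {hy : ∀ f ∈ s, aeval y f = 0} (i : σ) :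
    coordLift y hy (coord s i) = y i :=
  aeval_X y i

theorem coord_algHom_ext {g₁ g₂ : (MvPolynomial σ k ⧸ Ideal.span s) →ₐ[k] T}
    (h : ∀ i, g₁ (coord s i) = g₂ (coord s i)) : g₁ = g₂ :=
  Ideal.Quotient.algHom_ext _ (MvPolynomial.algHom_ext h)

end Coord

section Bivariate

variable {k T : Type*} [CommRing k] [CommRing T] [Algebra k T]

theorem bivariate_algHom_ext {f g : k[X][X] →ₐ[k] T} (hX : f (.C .X) = g (.C .X))
    (hY : f .X = g .X) : f = g :=
  Polynomial.algHom_ext' (Polynomial.algHom_ext hX) hY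

theorem aevalAeval_map_C (z t : T) (q : k[X]) :
    Polynomial.aevalAeval z t (q.map Polynomial.C) = Polynomial.aeval t q := by
  rw [← Polynomial.Bivariate.swap_C, Polynomial.Bivariate.aevalAeval_swap,
    Polynomial.aevalAeval_C]

variable [Algebra k[X][X] T] [IsScalarTower k k[X][X] T]

theorem aeval_algebraMap_C_X (p : k[X]) :
    Polynomial.aeval (algebraMap k[X][X] T (.C .X)) p = algebraMap k[X][X] T (.C p) := by
  rw [Polynomial.aeval_algebraMap_apply, ← Polynomial.algebraMap_eq,
    Polynomial.aeval_algebraMap_apply, Polynomial.aeval_X_left_apply]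

theorem aeval_algebraMap_X (q : k[X]) :
    Polynomial.aeval (algebraMap k[X][X] T .X) q = algebraMap k[X][X] T (q.map Polynomial.C) := by
  rw [Polynomial.aeval_algebraMap_apply, Polynomial.aeval_X_left_eq_map, Polynomial.algebraMap_eq]

end Bivariate

section Aeval

variable {T : Type*} [CommRing T] [Algebra ℂ T] {n : ℕ} {p q : ℂ[X]}

theorem aeval_wEq (y : Fin 4 → T) : aeval y (wEq n p) = y 1 ^ n - Polynomial.aeval (y 0) p := by
  simp [wEq, ← Polynomial.aeval_algHom_apply]

theorem aeval_xEq (y : Fin 4 → T) : aeval y (xEq n q) = y 3 ^ n - Polynomial.aeval (y 2) q := by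
  simp [xEq, ← Polynomial.aeval_algHom_apply]

theorem aeval_quotEq (y : Fin 3 → T) : aeval y (quotEq n p q) =
    y 2 ^ n * Polynomial.aeval (y 0) p - Polynomial.aeval (y 1) q := by
  simp [quotEq, ← Polynomial.aeval_algHom_apply]

end Aeval

variable (n : ℕ) (p q : ℂ[X])

section Prod

/-- The algebra `ℂ[z, t₃][w, x] / (wⁿ - p(z), xⁿ - q(t₃))`; in `ℂ[X][X]` the inner variable is `z`
and the outer one is `t₃`. -/
abbrev BivariateKummerProd : Type :=
  KummerProd n (.C p : ℂ[X][X]) (q.map Polynomial.C)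

/-- The functions `z, w₂, t₃, x` in `BivariateKummerProd n p q`, in the order of the variables of
`wEq` and `xEq`. -/
def kummerProdCoord : Fin 4 → BivariateKummerProd n p q :=
  ![algebraMap ℂ[X][X] _ (.C .X), KummerProd.w n _ _, algebraMap ℂ[X][X] _ .X,
    KummerProd.x n _ _]

/-- The comparison map from the coordinate ring of the product of curves, one half of
`kummerProdEquiv`. -/
def toKummerProd : HSurf2 (wEq n p) (xEq n q) →ₐ[ℂ] BivariateKummerProd n p q :=
  coordLift (kummerProdCoord n p q) <| by
    rintro _ (rfl | rfl)
    · rw [aeval_wEq, sub_eq_zero]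
      exact KummerProd.w_pow.trans (aeval_algebraMap_C_X p).symm
    · rw [aeval_xEq, sub_eq_zero]
      exact KummerProd.x_pow.trans (aeval_algebraMap_X q).symm

theorem toKummerProd_coord (i : Fin 4) :
    toKummerProd n p q (coord {wEq n p, xEq n q} i) = kummerProdCoord n p q i :=
  coordLift_coord i

/-- The comparison map to the coordinate ring of the product of curves, the other half of
`kummerProdEquiv`. -/
def ofKummerProd : BivariateKummerProd n p q →ₐ[ℂ] HSurf2 (wEq n p) (xEq n q) :=
  KummerProd.lift (Polynomial.aevalAeval (coord _ 0) (coord _ 2)) (coord _ 1) (coord _ 3)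
    (by
      rw [Polynomial.aevalAeval_C, ← sub_eq_zero, ← aeval_wEq]
      exact aeval_coord (Set.mem_insert _ _))
    (by
      rw [aevalAeval_map_C, ← sub_eq_zero, ← aeval_xEq]
      exact aeval_coord (Set.mem_insert_of_mem _ rfl))

theorem ofKummerProd_kummerProdCoord :
    ∀ i, ofKummerProd n p q (kummerProdCoord n p q i) = coord _ i
  | 0 => (KummerProd.lift_algebraMap _).trans (Polynomial.aevalAeval_X _ _)
  | 1 => KummerProd.lift_w
  | 2 => (KummerProd.lift_algebraMap _).trans (Polynomial.aevalAeval_Y _ _)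
  | 3 => KummerProd.lift_x

theorem ofKummerProd_comp_toKummerProd :
    (ofKummerProd n p q).comp (toKummerProd n p q) = AlgHom.id ℂ _ :=
  coord_algHom_ext fun i => by
    rw [AlgHom.comp_apply, toKummerProd_coord, ofKummerProd_kummerProdCoord, AlgHom.id_apply]

theorem toKummerProd_comp_ofKummerProd :
    (toKummerProd n p q).comp (ofKummerProd n p q) = AlgHom.id ℂ _ := by
  have map_coord (i : Fin 4) : toKummerProd n p q (ofKummerProd n p q (kummerProdCoord n p q i)) =
      kummerProdCoord n p q i :=
    (congrArg _ (ofKummerProd_kummerProdCoord n p q i)).trans (toKummerProd_coord n p q i)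
  exact KummerProd.algHom_ext (bivariate_algHom_ext (map_coord 0) (map_coord 2)) (map_coord 1)
    (map_coord 3)

/-- The presentation of the coordinate ring of the product of curves as `ℂ[z, t₃]` with two
`n`-th roots adjoined. -/
def kummerProdEquiv : BivariateKummerProd n p q ≃ₐ[ℂ] HSurf2 (wEq n p) (xEq n q) :=
  AlgEquiv.ofAlgHom (ofKummerProd n p q) (toKummerProd n p q)
    (ofKummerProd_comp_toKummerProd n p q)
    (toKummerProd_comp_ofKummerProd n p q)

end Prod

section Quot

/-- The algebra `ℂ[z, t₃][v] / (p(z) vⁿ - q(t₃))`; in `ℂ[X][X]` the inner variable is `z` and the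
outer one is `t₃`. -/
abbrev BivariateKummerQuot : Type :=
  KummerQuot n (.C p : ℂ[X][X]) (q.map Polynomial.C)

/-- The functions `z, t₃, w₁` in `BivariateKummerQuot n p q`, in the order of the variables of
`quotEq`. -/
def kummerQuotCoord : Fin 3 → BivariateKummerQuot n p q :=
  ![algebraMap ℂ[X][X] _ (.C .X), algebraMap ℂ[X][X] _ .X, KummerQuot.v n _ _]

/-- The comparison map from the coordinate ring of the quotient surface, one half of
`kummerQuotEquiv`. -/
def toKummerQuot : HSurf (quotEq n p q) →ₐ[ℂ] BivariateKummerQuot n p q :=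
  coordLift (kummerQuotCoord n p q) <| by
    rintro _ rfl
    rw [aeval_quotEq, sub_eq_zero, mul_comm]
    exact (congrArg (· * _) (aeval_algebraMap_C_X p)).trans <|
      KummerQuot.mul_v_pow.trans (aeval_algebraMap_X q).symm

theorem toKummerQuot_coord (i : Fin 3) :
    toKummerQuot n p q (coord {quotEq n p q} i) = kummerQuotCoord n p q i :=
  coordLift_coord i

/-- The comparison map to the coordinate ring of the quotient surface, the other half of
`kummerQuotEquiv`. -/
def ofKummerQuot : BivariateKummerQuot n p q →ₐ[ℂ] HSurf (quotEq n p q) :=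
  KummerQuot.lift (Polynomial.aevalAeval (coord _ 0) (coord _ 1)) (coord _ 2) <| by
    rw [Polynomial.aevalAeval_C, aevalAeval_map_C, ← sub_eq_zero, mul_comm, ← aeval_quotEq]
    exact aeval_coord rfl

theorem ofKummerQuot_kummerQuotCoord :
    ∀ i, ofKummerQuot n p q (kummerQuotCoord n p q i) = coord _ i
  | 0 => (KummerQuot.lift_algebraMap _).trans (Polynomial.aevalAeval_X _ _)
  | 1 => (KummerQuot.lift_algebraMap _).trans (Polynomial.aevalAeval_Y _ _)
  | 2 => KummerQuot.lift_v

theorem ofKummerQuot_comp_toKummerQuot :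
    (ofKummerQuot n p q).comp (toKummerQuot n p q) = AlgHom.id ℂ _ :=
  coord_algHom_ext fun i => by
    rw [AlgHom.comp_apply, toKummerQuot_coord, ofKummerQuot_kummerQuotCoord, AlgHom.id_apply]

theorem toKummerQuot_comp_ofKummerQuot :
    (toKummerQuot n p q).comp (ofKummerQuot n p q) = AlgHom.id ℂ _ := by
  have map_coord (i : Fin 3) : toKummerQuot n p q (ofKummerQuot n p q (kummerQuotCoord n p q i)) =
      kummerQuotCoord n p q i :=
    (congrArg _ (ofKummerQuot_kummerQuotCoord n p q i)).trans (toKummerQuot_coord n p q i)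
  exact KummerQuot.algHom_ext (bivariate_algHom_ext (map_coord 0) (map_coord 1)) (map_coord 2)

/-- The presentation of the coordinate ring of the quotient surface as an extension of
`ℂ[z, t₃]`. -/
def kummerQuotEquiv : HSurf (quotEq n p q) ≃ₐ[ℂ] BivariateKummerQuot n p q :=
  AlgEquiv.ofAlgHom (toKummerQuot n p q) (ofKummerQuot n p q)
    (toKummerQuot_comp_ofKummerQuot n p q)
    (ofKummerQuot_comp_toKummerQuot n p q)

end Quot

/-- `kummerProdEquiv` on function fields. -/
def kummerProdFunctionFieldEquiv : FractionRing (BivariateKummerProd n p q) ≃ₐ[ℂ]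
    FractionRing (HSurf2 (wEq n p) (xEq n q)) :=
  IsFractionRing.algEquivOfAlgEquiv (kummerProdEquiv n p q)

theorem kummerProdFunctionFieldEquiv_coord (i : Fin 4) :
    kummerProdFunctionFieldEquiv n p q (algebraMap _ _ (kummerProdCoord n p q i)) =
      cls2 (wEq n p) (xEq n q) (X i) :=
  (IsFractionRing.algEquivOfAlgEquiv_algebraMap _ _).trans
    (congrArg (algebraMap _ _) (ofKummerProd_kummerProdCoord n p q i))

/-- `kummerQuotEquiv` on function fields. -/
def kummerQuotFunctionFieldEquiv : FractionRing (HSurf (quotEq n p q)) ≃ₐ[ℂ]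
    FractionRing (BivariateKummerQuot n p q) :=
  IsFractionRing.algEquivOfAlgEquiv (kummerQuotEquiv n p q)

theorem kummerQuotFunctionFieldEquiv_cls (i : Fin 3) :
    kummerQuotFunctionFieldEquiv n p q (cls (quotEq n p q) (X i)) =
      algebraMap _ _ (kummerQuotCoord n p q i) :=
  (IsFractionRing.algEquivOfAlgEquiv_algebraMap _ _).trans
    (congrArg (algebraMap _ _) (toKummerQuot_coord n p q i))

end CoordinateRing

theorem stmt6_general {p q : ℂ[X]} (hp : p ≠ 0) (hq : q ≠ 0) {n : ℕ} [NeZero n] {ζ : ℂ}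
    (hζ : IsPrimitiveRoot ζ n) :
    ∃ τ : FractionRing (HSurf2 (wEq n p) (xEq n q)) ≃ₐ[ℂ]
        FractionRing (HSurf2 (wEq n p) (xEq n q)),
      orderOf τ = n ∧
      τ (cls2 (wEq n p) (xEq n q) (X 1)) = ζ • cls2 (wEq n p) (xEq n q) (X 1) ∧
      τ (cls2 (wEq n p) (xEq n q) (X 3)) = ζ • cls2 (wEq n p) (xEq n q) (X 3) ∧
      τ (cls2 (wEq n p) (xEq n q) (X 0)) = cls2 (wEq n p) (xEq n q) (X 0) ∧
      τ (cls2 (wEq n p) (xEq n q) (X 2)) = cls2 (wEq n p) (xEq n q) (X 2) ∧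
      ∃ ψ : FractionRing (HSurf (quotEq n p q)) ≃ₐ[ℂ]
          AlgHom.equalizer τ.toAlgHom (AlgHom.id ℂ (FractionRing (HSurf2 (wEq n p) (xEq n q)))),
        (ψ (cls (quotEq n p q) (X 2)) : FractionRing (HSurf2 (wEq n p) (xEq n q))) *
            cls2 (wEq n p) (xEq n q) (X 1) = cls2 (wEq n p) (xEq n q) (X 3) ∧
        (ψ (cls (quotEq n p q) (X 0)) : FractionRing (HSurf2 (wEq n p) (xEq n q))) =
          cls2 (wEq n p) (xEq n q) (X 0) ∧
        (ψ (cls (quotEq n p q) (X 1)) : FractionRing (HSurf2 (wEq n p) (xEq n q))) =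
          cls2 (wEq n p) (xEq n q) (X 2) := by
  have hP : (Polynomial.C p : ℂ[X][X]) ≠ 0 := Polynomial.C_ne_zero.mpr hp
  have := KummerQuot.isAlgebraic (n := n) (isRelPrime_C_map_C hp hq)
  have := KummerQuot.isTorsionFree (n := n) (isRelPrime_C_map_C hp hq)
  let e := kummerProdFunctionFieldEquiv n p q
  let e' := kummerQuotFunctionFieldEquiv n p q
  have e_coord := kummerProdFunctionFieldEquiv_coord n p q
  have e'_cls := kummerQuotFunctionFieldEquiv_cls n p q
  obtain ⟨τ, orderOf_τ, τ_w, ψ, ψ_v, ψ_base⟩ := exists_kummer_action (Q := q.map Polynomial.C)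
    (FractionRing (BivariateKummerQuot n p q)) (FractionRing (BivariateKummerProd n p q)) hP hζ e
  have ψ_cls (i : Fin 3) : (ψ (e' (cls (quotEq n p q) (X i))) :
      FractionRing (HSurf2 (wEq n p) (xEq n q))) = ψ (algebraMap _ _ (kummerQuotCoord n p q i)) :=
    congrArg _ (congrArg ψ (e'_cls i))
  have τ_ψ (l) : τ (ψ l) = ψ l := (ψ l).2
  have ψ_z := (ψ_base (.C .X)).trans (e_coord 0)
  have ψ_t := (ψ_base .X).trans (e_coord 2)
  replace ψ_v := (congrArg (_ * ·) (e_coord 1)).symm.trans (ψ_v.trans (e_coord 3))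
  replace τ_w := (congrArg τ (e_coord 1)).symm.trans (τ_w.trans (congrArg (ζ • ·) (e_coord 1)))
  refine ⟨τ, orderOf_τ, τ_w, ?_, ?_, ?_, e'.trans ψ, ?_, ?_, ?_⟩
  · rw [← ψ_v, map_mul, τ_ψ, τ_w, mul_smul_comm]
  · rw [← ψ_z, τ_ψ]
  · rw [← ψ_t, τ_ψ]
  · exact (congrArg (· * _) (ψ_cls 2)).trans ψ_v
  · exact (ψ_cls 0).trans ψ_z
  · exact (ψ_cls 1).trans ψ_t

/-- The polynomial `P(z)` as an element of `ℂ[z]`. -/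
def quintic (a b c : ℂ) : ℂ[X] :=
  let A : ℂ[X] := .C (b - c)⁻¹ * (.C b - .X)
  let B : ℂ[X] := .C (c - b)⁻¹ * (.C c - .X)
  .X * (.X - 1) * A * B * (A * .C (b₁ a b c) - B * .C (a₁ a b c))

theorem C_mul_C_sub_X_ne_zero {R : Type*} [CommRing R] [IsDomain R] {r : R} (hr : r ≠ 0) (s : R) :
    (.C r * (.C s - .X) : R[X]) ≠ 0 :=
  mul_ne_zero (Polynomial.C_ne_zero.mpr hr) (sub_ne_zero.mpr (Polynomial.X_ne_C s).symm)

theorem quintic_ne_zero {a b c : ℂ} (hab : a ≠ b) (hbc : b ≠ c) : quintic a b c ≠ 0 := by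
  have b_sub_c_ne_zero : b - c ≠ 0 := sub_ne_zero.mpr hbc
  have c_sub_b_ne_zero : c - b ≠ 0 := sub_ne_zero.mpr hbc.symm
  have a₁_ne_zero : a₁ a b c ≠ 0 := div_ne_zero (sub_ne_zero.mpr hab) b_sub_c_ne_zero
  refine mul_ne_zero (mul_ne_zero (mul_ne_zero (mul_ne_zero Polynomial.X_ne_zero
    (Polynomial.X_sub_C_ne_zero 1)) (C_mul_C_sub_X_ne_zero (inv_ne_zero b_sub_c_ne_zero) b))
    (C_mul_C_sub_X_ne_zero (inv_ne_zero c_sub_b_ne_zero) c)) fun h => a₁_ne_zero ?_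
  -- At `z = b` the last factor takes the value `-a₁`.
  simpa [c_sub_b_ne_zero] using congrArg (Polynomial.eval b) h

theorem X_mul_X_add_one_ne_zero {R : Type*} [CommRing R] [IsDomain R] :
    (.X * (.X + 1) : R[X]) ≠ 0 :=
  mul_ne_zero Polynomial.X_ne_zero (Polynomial.X_add_C_ne_zero 1)

theorem pC₁_eq_wEq (a b c : ℂ) : pC₁ a b c = wEq 3 (quintic a b c) := by
  simp [pC₁, wEq, quintic, P4, A₁4, B₁4]

theorem pF₁4_eq_xEq : pF₁4 = xEq 3 (.X * (.X + 1)) := by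
  simp [pF₁4, xEq]

theorem pS₂_eq_quotEq (a b c : ℂ) :
    pS₂ a b c = quotEq 3 (quintic a b c) (.X * (.X + 1)) := by
  simp [pS₂, quotEq, quintic, A₁', B₁']

theorem isPrimitiveRoot_ω_sq : IsPrimitiveRoot (ω ^ 2) 3 :=
  (Complex.isPrimitiveRoot_exp 3 three_ne_zero).pow_of_coprime 2 (by norm_num)

/-- Let `a, b, c ∈ ℂ ∖ {0,1}` be pairwise distinct, let
`K = Frac(ℂ[z,w₂,t₃,x]/(w₂³ − P(z), x³ − t₃(t₃+1)))` be the function field of `C₁ × F₁`,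
and let `τ` be the `ℂ`-algebra automorphism of `K` of order 3 determined by
`τ(w₂) = ω²·w₂`, `τ(x) = ω²·x`, `τ(z) = z`, `τ(t₃) = t₃` (the diagonal `ℤ/3ℤ` action).
Then the fixed field `K^τ` is isomorphic as a `ℂ`-algebra to the function field of `S₂`,
an isomorphism `ψ` being induced by `w₁ ↦ x/w₂` (denominator-free: `ψ(w₁)·w₂ = x`),
with `z, t₃` unchanged. -/
theorem stmt6 (a b c : ℂ) (ha0 : a ≠ 0) (ha1 : a ≠ 1) (hb0 : b ≠ 0) (hb1 : b ≠ 1)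
    (hc0 : c ≠ 0) (hc1 : c ≠ 1) (hab : a ≠ b) (hac : a ≠ c) (hbc : b ≠ c) :
    ∃ τ : FractionRing (HSurf2 (pC₁ a b c) pF₁4) ≃ₐ[ℂ] FractionRing (HSurf2 (pC₁ a b c) pF₁4),
      orderOf τ = 3 ∧
      τ (cls2 (pC₁ a b c) pF₁4 (X 1)) = (ω ^ 2 : ℂ) • cls2 (pC₁ a b c) pF₁4 (X 1) ∧
      τ (cls2 (pC₁ a b c) pF₁4 (X 3)) = (ω ^ 2 : ℂ) • cls2 (pC₁ a b c) pF₁4 (X 3) ∧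
      τ (cls2 (pC₁ a b c) pF₁4 (X 0)) = cls2 (pC₁ a b c) pF₁4 (X 0) ∧
      τ (cls2 (pC₁ a b c) pF₁4 (X 2)) = cls2 (pC₁ a b c) pF₁4 (X 2) ∧
      ∃ ψ : FractionRing (HSurf (pS₂ a b c)) ≃ₐ[ℂ]
          (AlgHom.equalizer τ.toAlgHom (AlgHom.id ℂ (FractionRing (HSurf2 (pC₁ a b c) pF₁4)))),
        (↑(ψ (cls (pS₂ a b c) (X 2))) : FractionRing (HSurf2 (pC₁ a b c) pF₁4))
            * cls2 (pC₁ a b c) pF₁4 (X 1) = cls2 (pC₁ a b c) pF₁4 (X 3) ∧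
        (↑(ψ (cls (pS₂ a b c) (X 0))) : FractionRing (HSurf2 (pC₁ a b c) pF₁4))
          = cls2 (pC₁ a b c) pF₁4 (X 0) ∧
        (↑(ψ (cls (pS₂ a b c) (X 1))) : FractionRing (HSurf2 (pC₁ a b c) pF₁4))
          = cls2 (pC₁ a b c) pF₁4 (X 2) := by
  rw [pC₁_eq_wEq, pF₁4_eq_xEq, pS₂_eq_quotEq]
  exact stmt6_general (quintic_ne_zero hab hbc) X_mul_X_add_one_ne_zero isPrimitiveRoot_ω_sq
end
end
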